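/- arXiv:1506.06844 — 8 statements merged into one kernel-verified Lean document; each statement's English description precedes it below -/
import Mathlib

section
/- Let A, B be tuples of complex numbers and s a complex number with ℜ(s+α+β) > 1 for every entry α of A and β of B. Then Σ_{n≥1} τ_A(n) τ_B(n) n^{−s} converges absolutely and equals ∏_{α∈A, β∈B} ζ(s+α+β) × ∏_p [ ∏_{α∈A, β∈B} (1 − p^{−s−α−β}) · Σ_{j≥0} τ_A(p^j) τ_B(p^j) p^{−js} ], where the product over primes p converges absolutely. -/
open Complex

/-- Shifted divisor function: `tauSh A n = ∑_{n₁⋯n_k = n} n₁^{-α₁}⋯n_k^{-α_k}`,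
defined by iterated Dirichlet convolution. -/
noncomputable def tauSh : List ℂ → ℕ → ℂ
  | [], n => if n = 1 then 1 else 0
  | a :: A, n => ∑ d ∈ n.divisors, (d : ℂ) ^ (-a) * tauSh A (n / d)

/-- `g_A(s,q) = ∏_{p ∣ q} ( ∏_{α∈A} (1 − p^{−s−α}) · ∑_{j≥0} τ_A(p^{j+q_p}) p^{−js} )`. -/
noncomputable def gSh (A : List ℂ) (s : ℂ) (q : ℕ) : ℂ :=
  ∏ p ∈ q.primeFactors,
    ((A.map (fun α => 1 - (p : ℂ) ^ (-s - α))).prod *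
      ∑' j : ℕ, tauSh A (p ^ (j + q.factorization p)) * (p : ℂ) ^ (-(j : ℂ) * s))

/-- `G_A(s,q) = ∑_{d∣q} (μ(d)/φ(d)) d^s ∑_{e∣d} (μ(e)/e^s) g_A(s, qe/d)`. -/
noncomputable def GSh (A : List ℂ) (s : ℂ) (q : ℕ) : ℂ :=
  ∑ d ∈ q.divisors, ((ArithmeticFunction.moebius d : ℂ) / (Nat.totient d : ℂ)) * (d : ℂ) ^ s *
    ∑ e ∈ d.divisors, (ArithmeticFunction.moebius e : ℂ) / (e : ℂ) ^ s * gSh A s (q * e / d)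


/-- The power function `n ↦ n^(-a)` (zero at zero) as an arithmetic function. -/
noncomputable def powAF (a : ℂ) : ArithmeticFunction ℂ :=
  ⟨fun n => if n = 0 then 0 else (n : ℂ) ^ (-a), by simp⟩

lemma powAF_mult (a : ℂ) : (powAF a).IsMultiplicative := by
  refine ⟨by simp [powAF], ?_⟩
  intro m n _
  simp only [powAF, ArithmeticFunction.coe_mk]
  by_cases hm : m = 0
  · simp [hm]
  by_cases hn : n = 0
  · simp [hn]
  simp [hm, hn, natCast_mul_natCast_cpow]

/-- `tauSh A` as an arithmetic function. -/
noncomputable def tauAF : List ℂ → ArithmeticFunction ℂ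
  | [] => 1
  | a :: A => powAF a * tauAF A

lemma tauAF_mult (A : List ℂ) : (tauAF A).IsMultiplicative := by
  induction A with
  | nil => exact ArithmeticFunction.isMultiplicative_one
  | cons a A ih => exact (powAF_mult a).mul ih

lemma tauSh_eq (A : List ℂ) (n : ℕ) : tauSh A n = tauAF A n := by
  induction A generalizing n with
  | nil => simp [tauSh, tauAF, ArithmeticFunction.one_apply]
  | cons a A ih =>
    rw [tauSh, tauAF, ArithmeticFunction.mul_apply,
      Nat.sum_divisorsAntidiagonal (fun x y => powAF a x * tauAF A y)]
    refine Finset.sum_congr rfl fun d hd => ?_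
    have : d ≠ 0 := (Nat.pos_of_mem_divisors hd).ne'
    simp [powAF, this, ih]

lemma card_div_mul (m n : ℕ) :
    (m * n).divisors.card ≤ m.divisors.card * n.divisors.card := by
  rw [Nat.divisors_mul]
  exact Finset.card_mul_le

lemma tauSh_bound (A : List ℂ) (m : ℝ) (hm : ∀ a ∈ A, m ≤ a.re) (n : ℕ) (hn : n ≠ 0) :
    ‖tauSh A n‖ ≤ (n : ℝ) ^ (-m) * (n.divisors.card : ℝ) ^ A.length := by
  induction A generalizing n with
  | nil =>
    simp only [tauSh]
    split_ifs with h1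
    · simp [h1]
    · simp; positivity
  | cons a A ih =>
    rw [tauSh]
    have key : ∀ d ∈ n.divisors, ‖(d : ℂ) ^ (-a) * tauSh A (n / d)‖ ≤
        (n : ℝ) ^ (-m) * (n.divisors.card : ℝ) ^ A.length := by
      intro d hd
      have hd0 : 0 < d := Nat.pos_of_mem_divisors hd
      have hdn : d ∣ n := Nat.dvd_of_mem_divisors hd
      have hq : n / d ≠ 0 := (Nat.div_pos (Nat.le_of_dvd (Nat.pos_of_ne_zero hn) hdn) hd0).ne'
      rw [norm_mul, norm_natCast_cpow_of_pos hd0]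
      have h1 : (d : ℝ) ^ ((-a).re) ≤ (d : ℝ) ^ (-m) := by
        apply Real.rpow_le_rpow_of_exponent_le
        · exact_mod_cast hd0
        · have := hm a (by simp)
          simp only [neg_re]; linarith
      have h2 := ih (fun b hb => hm b (by simp [hb])) (n / d) hq
      have h3 : ((n / d).divisors.card : ℝ) ≤ n.divisors.card := by
        exact_mod_cast Finset.card_le_card
          (Nat.divisors_subset_of_dvd hn (Nat.div_dvd_of_dvd hdn))
      have h4 : (n : ℝ) ^ (-m) = (d : ℝ) ^ (-m) * ((n / d : ℕ) : ℝ) ^ (-m) := by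
        rw [← Real.mul_rpow (by positivity) (by positivity)]
        congr 1
        exact_mod_cast (Nat.mul_div_cancel' hdn).symm
      rw [h4, mul_assoc]
      refine mul_le_mul h1 (h2.trans ?_) (norm_nonneg _) (by positivity)
      gcongr
    refine (norm_sum_le _ _).trans ((Finset.sum_le_sum key).trans ?_)
    rw [Finset.sum_const, nsmul_eq_mul, List.length_cons, pow_succ]
    apply le_of_eq; ring

lemma summable_card_pow (c : ℝ) (hc : 1 < c) (k : ℕ) :
    LSeriesSummable (fun n => ((n.divisors.card : ℂ)) ^ k) (c : ℂ) := by
  induction k with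
  | zero =>
    apply LSeriesSummable_of_le_const_mul_rpow (x := 1) (by simpa using hc)
    exact ⟨1, by simp⟩
  | succ k ih =>
    have h := ih.convolution ih
    refine Summable.of_norm_bounded h.norm fun n => ?_
    apply LSeries.norm_term_le
    rw [LSeries.convolution_def]
    have e : (∑ p ∈ n.divisorsAntidiagonal,
        (p.1.divisors.card : ℂ) ^ k * (p.2.divisors.card : ℂ) ^ k) =
        ((∑ p ∈ n.divisorsAntidiagonal,
        p.1.divisors.card ^ k * p.2.divisors.card ^ k : ℕ) : ℂ) := by push_cast; rfl
    have e2 : ((n.divisors.card : ℂ)) ^ (k+1) = ((n.divisors.card ^ (k+1) : ℕ) : ℂ) := by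
      push_cast; rfl
    beta_reduce
    rw [e, e2, norm_natCast, norm_natCast]
    norm_cast
    have : ∀ p ∈ n.divisorsAntidiagonal,
        n.divisors.card ^ k ≤ p.1.divisors.card ^ k * p.2.divisors.card ^ k := by
      intro p hp
      rw [← mul_pow, ← (Nat.mem_divisorsAntidiagonal.mp hp).1]
      exact Nat.pow_le_pow_left (card_div_mul _ _) _
    have h5 := Finset.sum_le_sum this
    rw [Finset.sum_const, smul_eq_mul] at h5
    have h6 : n.divisorsAntidiagonal.card = n.divisors.card := by
      rw [← Nat.map_div_right_divisors, Finset.card_map]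
    rw [h6] at h5
    rw [pow_succ']
    exact h5

lemma exists_lower (L : List ℂ) :
    ∃ m : ℝ, (∀ x ∈ L, m ≤ x.re) ∧ (L = [] ∨ ∃ x ∈ L, x.re = m) := by
  induction L with
  | nil => exact ⟨0, by simp, by simp⟩
  | cons a L ih =>
    obtain ⟨m, h1, h2⟩ := ih
    rcases h2 with rfl | ⟨x, hx, hxm⟩
    · exact ⟨a.re, by simp, by simp⟩
    · rcases le_total a.re m with h | h
      · refine ⟨a.re, ?_, Or.inr ⟨a, by simp, rfl⟩⟩
        intro y hy
        rcases List.mem_cons.mp hy with rfl | hy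
        · exact le_rfl
        · exact h.trans (h1 y hy)
      · refine ⟨m, ?_, Or.inr ⟨x, by simp [hx], hxm⟩⟩
        intro y hy
        rcases List.mem_cons.mp hy with rfl | hy
        · exact h
        · exact h1 y hy

lemma exists_lower_pair (A B : List ℂ) (s : ℂ)
    (h : ∀ α ∈ A, ∀ β ∈ B, 1 < (s + α + β).re) :
    ∃ a b : ℝ, (∀ x ∈ A, a ≤ x.re) ∧ (∀ x ∈ B, b ≤ x.re) ∧ 1 < s.re + a + b := by
  obtain ⟨a, ha, ha'⟩ := exists_lower A
  obtain ⟨b, hb, hb'⟩ := exists_lower B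
  rcases ha' with rfl | ⟨x, hx, rfl⟩
  · exact ⟨2 - s.re - b, b, by simp, hb, by linarith⟩
  rcases hb' with rfl | ⟨y, hy, rfl⟩
  · exact ⟨x.re, 2 - s.re - x.re, ha, by simp, by linarith⟩
  · exact ⟨_, _, ha, hb, by simpa using h x hx y hy⟩

lemma tauSh_zero (A : List ℂ) : tauSh A 0 = 0 := by simp [tauSh_eq]

lemma tauSh_one (A : List ℂ) : tauSh A 1 = 1 := by
  rw [tauSh_eq]; exact (tauAF_mult A).1

lemma tauSh_mul (A : List ℂ) {m n : ℕ} (h : Nat.Coprime m n) :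
    tauSh A (m * n) = tauSh A m * tauSh A n := by
  simp only [tauSh_eq]; exact (tauAF_mult A).2 h

lemma main_summable (A B : List ℂ) (s : ℂ)
    (h : ∀ α ∈ A, ∀ β ∈ B, 1 < (s + α + β).re) :
    Summable (fun n : ℕ => ‖tauSh A n * tauSh B n * (n : ℂ) ^ (-s)‖) := by
  obtain ⟨a, b, ha, hb, hab⟩ := exists_lower_pair A B s h
  have hs := (summable_card_pow _ hab (A.length + B.length)).norm
  refine Summable.of_nonneg_of_le (fun _ => norm_nonneg _) (fun n => ?_) hs
  by_cases hn : n = 0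
  · simp [hn, tauSh_zero]
  have hn' : 0 < (n : ℝ) := by exact_mod_cast Nat.pos_of_ne_zero hn
  rw [LSeries.norm_term_eq, if_neg hn, norm_mul, norm_mul,
    norm_natCast_cpow_of_pos (Nat.pos_of_ne_zero hn), norm_pow, norm_natCast, ofReal_re,
    div_eq_mul_inv, ← Real.rpow_neg hn'.le]
  have e : (n : ℝ) ^ (-(s.re + a + b)) = (n : ℝ) ^ (-a) * (n : ℝ) ^ (-b) * (n : ℝ) ^ ((-s).re) := by
    rw [← Real.rpow_add hn', ← Real.rpow_add hn']
    congr 1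
    simp only [neg_re]; ring
  rw [e, pow_add]
  calc _ ≤ ((n : ℝ) ^ (-a) * (n.divisors.card : ℝ) ^ A.length) *
        ((n : ℝ) ^ (-b) * (n.divisors.card : ℝ) ^ B.length) * (n : ℝ) ^ ((-s).re) := by
        gcongr
        · exact tauSh_bound A a ha n hn
        · exact tauSh_bound B b hb n hn
    _ = _ := by ring

/-- `u` is absolutely convergent as a product, with value inverse to `z`. -/
def GoodProd (u : Nat.Primes → ℂ) (z : ℂ) : Prop :=
  Summable (fun p => ‖u p - 1‖) ∧ z * ∏' p, u p = 1

lemma mult_of_summable {u : Nat.Primes → ℂ} (h : Summable (fun p => ‖u p - 1‖)) :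
    Multipliable u := by
  have := multipliable_one_add_of_summable h
  simpa using this

lemma summable_mul_sub_one {u v : Nat.Primes → ℂ} (hu : Summable (fun p => ‖u p - 1‖))
    (hv : Summable (fun p => ‖v p - 1‖)) : Summable (fun p => ‖u p * v p - 1‖) := by
  have h1 : Summable (fun p => ‖u p - 1‖ * ‖v p - 1‖) := by
    refine Summable.of_nonneg_of_le (fun _ => by positivity) (fun p => ?_)
      (hv.mul_left (∑' p, ‖u p - 1‖))
    gcongr
    exact hu.le_tsum p (fun _ _ => norm_nonneg _)
  refine Summable.of_nonneg_of_le (fun _ => norm_nonneg _) (fun p => ?_) ((h1.add hu).add hv)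
  have : u p * v p - 1 = (u p - 1) * (v p - 1) + (u p - 1) + (v p - 1) := by ring
  rw [this, ← norm_mul]
  exact norm_add₃_le

lemma GoodProd.mul {u v : Nat.Primes → ℂ} {z w : ℂ} (hu : GoodProd u z) (hv : GoodProd v w) :
    GoodProd (fun p => u p * v p) (z * w) := by
  refine ⟨summable_mul_sub_one hu.1 hv.1, ?_⟩
  rw [(mult_of_summable hu.1).tprod_mul (mult_of_summable hv.1), mul_mul_mul_comm, hu.2, hv.2,
    one_mul]

lemma GoodProd.one : GoodProd (fun _ => 1) 1 := ⟨by simp, by simp⟩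

lemma GoodProd.list (L : List ℂ) (u : ℂ → Nat.Primes → ℂ) (z : ℂ → ℂ)
    (h : ∀ x ∈ L, GoodProd (u x) (z x)) :
    GoodProd (fun p => (L.map (fun x => u x p)).prod) (L.map z).prod := by
  induction L with
  | nil => simpa using GoodProd.one
  | cons a L ih =>
    simp only [List.map_cons, List.prod_cons]
    exact (h a (by simp)).mul (ih fun x hx => h x (by simp [hx]))

lemma GoodProd.zeta (w : ℂ) (hw : 1 < w.re) :
    GoodProd (fun p => 1 - ((p : ℕ) : ℂ) ^ (-w)) (riemannZeta w) := by
  have hz := riemannZeta_eulerProduct_hasProd hw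
  have hs : Summable (fun p : Nat.Primes => ‖(1 - ((p : ℕ) : ℂ) ^ (-w)) - 1‖) := by
    have : Summable (fun p : Nat.Primes => ((p : ℕ) : ℝ) ^ (-w.re)) :=
      Nat.Primes.summable_rpow.mpr (by linarith)
    refine this.congr fun p => ?_
    rw [sub_sub_cancel_left, norm_neg, norm_natCast_cpow_of_pos p.2.pos, neg_re]
  refine ⟨hs, ?_⟩
  rw [← hz.tprod_eq, ← hz.multipliable.tprod_mul (mult_of_summable hs)]
  have : ∀ p : Nat.Primes, (1 - ((p : ℕ) : ℂ) ^ (-w))⁻¹ * (1 - ((p : ℕ) : ℂ) ^ (-w)) = 1 := by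
    intro p
    apply inv_mul_cancel₀
    intro h0
    have h1 : ‖((p : ℕ) : ℂ) ^ (-w)‖ = 1 := by rw [← sub_eq_zero.mp h0, norm_one]
    rw [norm_natCast_cpow_of_pos p.2.pos] at h1
    have : ((p : ℕ) : ℝ) ^ ((-w).re) < 1 :=
      Real.rpow_lt_one_of_one_lt_of_neg (by exact_mod_cast p.2.one_lt)
        (by simp only [neg_re]; linarith)
    linarith
  simp [this]

lemma summable_local {f : ℕ → ℂ} (h1 : f 1 = 1) (hf : Summable (fun n => ‖f n‖)) :
    Summable (fun p : Nat.Primes => ‖(∑' j : ℕ, f ((p : ℕ) ^ j)) - 1‖) := by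
  have hinj : Function.Injective (fun x : Nat.Primes × ℕ => (x.1 : ℕ) ^ (x.2 + 1)) := by
    intro x y hxy
    apply Nat.Primes.prodNatEquiv.injective
    apply Subtype.ext
    exact hxy
  have h2 : Summable (fun x : Nat.Primes × ℕ => ‖f ((x.1 : ℕ) ^ (x.2 + 1))‖) :=
    hf.comp_injective hinj
  refine Summable.of_nonneg_of_le (fun _ => norm_nonneg _) (fun p => ?_) h2.prod
  have h3 : Summable (fun j : ℕ => ‖f ((p : ℕ) ^ j)‖) :=
    hf.comp_injective (Nat.pow_right_injective p.2.two_le)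
  rw [h3.of_norm.tsum_eq_zero_add]
  simp only [pow_zero, h1, add_sub_cancel_left]
  exact norm_tsum_le_tsum_norm ((summable_nat_add_iff 1).mpr h3)

/-- For tuples A, B and s with ℜ(s+α+β) > 1 for all α∈A, β∈B,
Σ_{n≥1} τ_A(n)τ_B(n) n^{−s} converges absolutely and equals
∏_{α,β} ζ(s+α+β) · ∏_p [ ∏_{α,β}(1 − p^{−s−α−β}) Σ_{j≥0} τ_A(p^j)τ_B(p^j) p^{−js} ],
the product over primes converging absolutely. -/
theorem stmt5 (A B : List ℂ) (s : ℂ)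
    (h : ∀ α ∈ A, ∀ β ∈ B, 1 < (s + α + β).re) :
    Summable (fun n : ℕ => ‖tauSh A n * tauSh B n * (n : ℂ) ^ (-s)‖) ∧
    Summable (fun p : Nat.Primes =>
      ‖(A.map (fun α => (B.map (fun β => 1 - ((p : ℕ) : ℂ) ^ (-s - α - β))).prod)).prod *
          (∑' j : ℕ, tauSh A ((p : ℕ) ^ j) * tauSh B ((p : ℕ) ^ j)
            * ((p : ℕ) : ℂ) ^ (-(j : ℂ) * s)) - 1‖) ∧
    ∑' n : ℕ, tauSh A n * tauSh B n * (n : ℂ) ^ (-s)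
      = (A.map (fun α => (B.map (fun β => riemannZeta (s + α + β))).prod)).prod *
        ∏' p : Nat.Primes,
          ((A.map (fun α => (B.map (fun β => 1 - ((p : ℕ) : ℂ) ^ (-s - α - β))).prod)).prod *
            ∑' j : ℕ, tauSh A ((p : ℕ) ^ j) * tauSh B ((p : ℕ) ^ j)
              * ((p : ℕ) : ℂ) ^ (-(j : ℂ) * s)) := by
  have hS := main_summable A B s h
  set f : ℕ → ℂ := fun n => tauSh A n * tauSh B n * (n : ℂ) ^ (-s) with hfdef
  have hf1 : f 1 = 1 := by simp [hfdef, tauSh_one]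
  have hf0 : f 0 = 0 := by simp [hfdef, tauSh_zero]
  have hmul : ∀ {m n : ℕ}, Nat.Coprime m n → f (m * n) = f m * f n := by
    intro m n hmn
    simp only [hfdef, tauSh_mul _ hmn, Nat.cast_mul, natCast_mul_natCast_cpow]
    ring
  have hE := EulerProduct.eulerProduct_hasProd hf1 hmul hS hf0
  have hloc := summable_local hf1 hS
  have hpow : ∀ p : Nat.Primes, (∑' j : ℕ, tauSh A ((p : ℕ) ^ j) * tauSh B ((p : ℕ) ^ j)
            * ((p : ℕ) : ℂ) ^ (-(j : ℂ) * s)) = ∑' j : ℕ, f ((p : ℕ) ^ j) := by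
    intro p
    refine tsum_congr fun j => ?_
    simp only [hfdef, Nat.cast_pow]
    rw [← natCast_cpow_natCast_mul, neg_mul, mul_neg]
  have hG : GoodProd (fun p => (A.map (fun α => (B.map
      (fun β => 1 - ((p : ℕ) : ℂ) ^ (-s - α - β))).prod)).prod)
      (A.map (fun α => (B.map (fun β => riemannZeta (s + α + β))).prod)).prod := by
    refine GoodProd.list A (fun α p => (B.map
      (fun β => 1 - ((p : ℕ) : ℂ) ^ (-s - α - β))).prod)
      (fun α => (B.map (fun β => riemannZeta (s + α + β))).prod) fun α hα => ?_
    refine GoodProd.list B (fun β p => 1 - ((p : ℕ) : ℂ) ^ (-s - α - β))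
      (fun β => riemannZeta (s + α + β)) fun β hβ => ?_
    have e : -s - α - β = -(s + α + β) := by ring
    simp only [e]
    exact GoodProd.zeta _ (h α hα β hβ)
  simp only [hpow]
  refine ⟨hS, summable_mul_sub_one hG.1 hloc, ?_⟩
  rw [(mult_of_summable hG.1).tprod_mul (mult_of_summable hloc), ← mul_assoc, hG.2, one_mul,
    hE.tprod_eq]
end

section
/- Let A be a tuple of complex numbers with a distinguished entry α̂, and let A′ be A with that entry removed. Suppose ℜ(α̂ − α) < 1 for every entry α of A. Then for every prime p and every integer r ≥ 1, G_A(1−α̂, p^r) = ∏_{α∈A′} (1 − p^{−1+α̂−α}) · Σ_{j≥0} τ_{A′}(p^{j+r}) p^{−j(1−α̂)}. -/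
open Complex

lemma tau_cons_pow (a : ℂ) (A : List ℂ) (p : ℕ) (hp : p.Prime) (n : ℕ) :
    tauSh (a :: A) (p ^ n) =
      ∑ i ∈ Finset.range (n + 1), ((p : ℂ) ^ (-a)) ^ i * tauSh A (p ^ (n - i)) := by
  rw [tauSh, Nat.sum_divisors_prime_pow hp]
  refine Finset.sum_congr rfl fun i hi => ?_
  have hi' : i ≤ n := by simpa [Nat.lt_succ_iff] using hi
  rw [Nat.pow_div hi' hp.pos]
  congr 1
  rw [Nat.cast_pow, ← Complex.cpow_nat_mul, ← Complex.natCast_cpow_natCast_mul]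

lemma tau_zero (A : List ℂ) (p : ℕ) (hp : p.Prime) : tauSh A (p ^ 0) = 1 := by
  induction A with
  | nil => simp [tauSh]
  | cons a A ih => rw [tau_cons_pow a A p hp]; simpa using ih

lemma tau_cons_succ (a : ℂ) (A : List ℂ) (p : ℕ) (hp : p.Prime) (n : ℕ) :
    tauSh (a :: A) (p ^ (n + 1)) =
      (p : ℂ) ^ (-a) * tauSh (a :: A) (p ^ n) + tauSh A (p ^ (n + 1)) := by
  rw [tau_cons_pow a A p hp, tau_cons_pow a A p hp, Finset.sum_range_succ', Finset.mul_sum]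
  congr 1
  · refine Finset.sum_congr rfl fun i _ => ?_
    rw [Nat.add_sub_add_right]; ring
  · simp

lemma tau_mid_succ (L₁ L₂ : List ℂ) (a : ℂ) (p : ℕ) (hp : p.Prime) (n : ℕ) :
    tauSh (L₁ ++ a :: L₂) (p ^ (n + 1)) =
      (p : ℂ) ^ (-a) * tauSh (L₁ ++ a :: L₂) (p ^ n) + tauSh (L₁ ++ L₂) (p ^ (n + 1)) := by
  induction L₁ generalizing n with
  | nil => exact tau_cons_succ a L₂ p hp n
  | cons b L ih =>
    simp only [List.cons_append]
    induction n with
    | zero =>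
      rw [tau_cons_succ b (L ++ a :: L₂) p hp, tau_cons_succ b (L ++ L₂) p hp, ih]
      simp only [tau_zero _ p hp]; ring
    | succ n ihn =>
      rw [tau_cons_succ b (L ++ a :: L₂) p hp (n+1), tau_cons_succ b (L ++ L₂) p hp (n+1), ih,
        ]
      linear_combination ((p : ℂ) ^ (-b)) * ihn - (p : ℂ) ^ (-a) * tau_cons_succ b (L ++ a :: L₂) p hp n

lemma tau_gen (A : List ℂ) (p : ℕ) (hp : p.Prime) (x : ℂ)
    (h : ∀ a ∈ A, ‖(p : ℂ) ^ (-a) * x‖ < 1) :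
    Summable (fun j : ℕ => ‖tauSh A (p ^ j) * x ^ j‖) ∧
      (A.map (fun a => 1 - (p : ℂ) ^ (-a) * x)).prod * ∑' j : ℕ, tauSh A (p ^ j) * x ^ j = 1 := by
  induction A with
  | nil =>
    have h0 : ∀ j : ℕ, j ≠ 0 → tauSh [] (p ^ j) * x ^ j = 0 := by
      intro j hj
      have : p ^ j ≠ 1 := (Nat.one_lt_pow hj hp.one_lt).ne'
      rw [tauSh, if_neg this, zero_mul]
    constructor
    · refine summable_of_ne_finset_zero (s := {0}) fun j hj => ?_
      rw [h0 j (by simpa using hj), norm_zero]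
    · rw [tsum_eq_single 0 h0]; simp [tauSh]
  | cons a A ih =>
    obtain ⟨ih1, ih2⟩ := ih fun b hb => h b (List.mem_cons_of_mem _ hb)
    have ha := h a List.mem_cons_self
    have hg : Summable (fun j : ℕ => ‖((p : ℂ) ^ (-a) * x) ^ j‖) := by
      simp only [norm_pow]; exact summable_geometric_of_lt_one (norm_nonneg _) ha
    have e : ∀ n : ℕ, tauSh (a :: A) (p ^ n) * x ^ n =
        ∑ i ∈ Finset.range (n + 1), ((p : ℂ) ^ (-a) * x) ^ i *
          (tauSh A (p ^ (n - i)) * x ^ (n - i)) := by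
      intro n
      rw [tau_cons_pow a A p hp, Finset.sum_mul]
      refine Finset.sum_congr rfl fun i hi => ?_
      have hi' : i ≤ n := by simpa [Nat.lt_succ_iff] using hi
      obtain ⟨k, rfl⟩ := Nat.exists_eq_add_of_le hi'
      rw [Nat.add_sub_cancel_left, mul_pow, pow_add]; ring
    simp only [e]
    have k1 := summable_norm_sum_mul_range_of_summable_norm
      (f := fun j : ℕ => ((p : ℂ) ^ (-a) * x) ^ j)
      (g := fun j : ℕ => tauSh A (p ^ j) * x ^ j) hg ih1
    have k2 := tsum_mul_tsum_eq_tsum_sum_range_of_summable_norm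
      (f := fun j : ℕ => ((p : ℂ) ^ (-a) * x) ^ j)
      (g := fun j : ℕ => tauSh A (p ^ j) * x ^ j) hg ih1
    refine ⟨k1, ?_⟩
    rw [← k2,
      tsum_geometric_of_norm_lt_one ha]
    have hne : 1 - (p : ℂ) ^ (-a) * x ≠ 0 := by
      intro h0
      rw [← sub_eq_zero.mp h0] at ha
      simp at ha
    rw [List.map_cons, List.prod_cons]
    refine Eq.trans ?_ ih2
    rw [mul_mul_mul_comm, mul_inv_cancel₀ hne, one_mul]

theorem stmt7 (L₁ L₂ : List ℂ) (αh : ℂ)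
    (h : ∀ α ∈ L₁ ++ αh :: L₂, (αh - α).re < 1)
    (p : ℕ) (hp : p.Prime) (r : ℕ) (hr : 1 ≤ r) :
    GSh (L₁ ++ αh :: L₂) (1 - αh) (p ^ r)
      = ((L₁ ++ L₂).map (fun α => 1 - (p : ℂ) ^ (-1 + αh - α))).prod *
          ∑' j : ℕ, tauSh (L₁ ++ L₂) (p ^ (j + r)) * (p : ℂ) ^ (-(j : ℂ) * (1 - αh)) := by
  obtain ⟨m, rfl⟩ := Nat.exists_eq_add_of_le' hr
  have hp0 : (p : ℂ) ≠ 0 := Nat.cast_ne_zero.mpr hp.ne_zero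
  have hp1 : (p : ℂ) - 1 ≠ 0 := by
    rw [sub_ne_zero]; exact_mod_cast hp.one_lt.ne'
  set A := L₁ ++ αh :: L₂ with hA
  set s : ℂ := 1 - αh with hs
  set x : ℂ := (p : ℂ) ^ (-s) with hx
  have hxs : (p : ℂ) ^ s * x = 1 := by
    rw [hx, ← Complex.cpow_add _ _ hp0]; simp
  have hxj : ∀ j : ℕ, (p : ℂ) ^ (-(j : ℂ) * s) = x ^ j := by
    intro j
    rw [hx, ← Complex.cpow_nat_mul]; congr 1; ring
  have hpx : ∀ α : ℂ, (p : ℂ) ^ (-s - α) = (p : ℂ) ^ (-α) * x := by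
    intro α
    rw [hx, ← Complex.cpow_add _ _ hp0]; congr 1; ring
  have hpx' : ∀ α : ℂ, (p : ℂ) ^ (-1 + αh - α) = (p : ℂ) ^ (-α) * x := by
    intro α
    rw [← hpx]; congr 1; rw [hs]; ring
  have hc : (p : ℂ) ^ s * (p : ℂ) ^ (αh) = p := by
    rw [← Complex.cpow_add _ _ hp0]; simp [hs]
  have hcx : (p : ℂ) * ((p : ℂ) ^ (-αh) * x) = 1 := by
    rw [← hpx]; nth_rewrite 1 [← Complex.cpow_one (p : ℂ)]
    rw [← Complex.cpow_add _ _ hp0]; simp [hs]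
  have hlt : ∀ a ∈ A, ‖(p : ℂ) ^ (-a) * x‖ < 1 := by
    intro a ha
    rw [← hpx, Complex.norm_natCast_cpow_of_pos hp.pos]
    refine Real.rpow_lt_one_of_one_lt_of_neg (by exact_mod_cast hp.one_lt) ?_
    have := h a ha
    simp [hs] at this ⊢; linarith
  obtain ⟨hsum, hgen⟩ := tau_gen A p hp x hlt
  have hsum' := hsum.of_norm
  set S : ℕ → ℂ := fun n => ∑' j : ℕ, tauSh A (p ^ (j + n)) * x ^ j with hS
  set P : ℂ := (A.map (fun a => 1 - (p : ℂ) ^ (-a) * x)).prod with hP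
  have hx0 : x ≠ 0 := right_ne_zero_of_mul_eq_one hxs
  have hsn : ∀ n, Summable fun j : ℕ => tauSh A (p ^ (j + n)) * x ^ j := by
    intro n
    have h1 := ((summable_nat_add_iff n).mpr hsum').mul_right ((x ^ n)⁻¹)
    refine h1.congr fun j => ?_
    rw [pow_add x]; field_simp
  have hSs : ∀ n, S n = tauSh A (p ^ n) + x * S (n + 1) := by
    intro n
    simp only [hS]
    rw [(hsn n).tsum_eq_zero_add, ← tsum_mul_left]
    congr 1
    · simp
    · refine tsum_congr fun j => ?_
      rw [show j + 1 + n = j + (n + 1) by ring, pow_succ]; ring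
  have hg : ∀ n, gSh A s (p ^ n) = P * S n := by
    intro n
    rcases Nat.eq_zero_or_pos n with rfl | hn
    · simp only [hS, add_zero]
      rw [hgen]; simp [gSh]
    · rw [gSh, Nat.primeFactors_prime_pow hn.ne' hp, Finset.prod_singleton]
      simp only [hxj, hpx, hp.factorization_pow, Finsupp.single_eq_same]
      rfl
  have hG : GSh A s (p ^ (m + 1)) =
      P * S (m + 1) - (p : ℂ) ^ s / (p - 1) * (P * S m - x * (P * S (m + 1))) := by
    have e2 : p ^ (m + 1) / p = p ^ m := by
      rw [pow_succ, Nat.mul_div_cancel _ hp.pos]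
    have e3 : p ^ (m + 1) * p / p = p ^ (m + 1) := Nat.mul_div_cancel _ hp.pos
    have e4 : (p : ℂ) ^ s = x⁻¹ := eq_inv_of_mul_eq_one_left hxs
    rw [GSh, Nat.sum_divisors_prime_pow hp, Finset.sum_range_succ', Finset.sum_range_succ',
      Finset.sum_eq_zero]
    · simp only [zero_add, pow_zero, pow_one, Nat.divisors_one, Finset.sum_singleton,
        hp.sum_divisors, e2, e3, mul_one, Nat.div_one, hg,
        ArithmeticFunction.moebius_apply_prime hp, Nat.totient_prime hp, Nat.totient_one,
        ArithmeticFunction.moebius_apply_one, Nat.cast_one, Complex.one_cpow, e4,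
        Nat.cast_sub hp.one_lt.le]
      push_cast
      field_simp
      ring
    · intro i _
      rw [ArithmeticFunction.moebius_apply_prime_pow hp (by omega)]
      simp
  have hT : ∑' j : ℕ, tauSh (L₁ ++ L₂) (p ^ (j + (m + 1))) * x ^ j
      = S (m + 1) - (p : ℂ) ^ (-αh) * S m := by
    simp only [hS]
    rw [← tsum_mul_left, ← (hsn (m+1)).tsum_sub ((hsn m).mul_left _)]
    refine tsum_congr fun j => ?_
    have := tau_mid_succ L₁ L₂ αh p hp (j + m)
    rw [← hA] at this
    rw [← add_assoc, this]; ring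
  have hPP : P = (1 - (p : ℂ) ^ (-αh) * x) *
      ((L₁ ++ L₂).map (fun α => 1 - (p : ℂ) ^ (-α) * x)).prod := by
    rw [hP, hA]
    simp only [List.map_append, List.map_cons, List.prod_append, List.prod_cons]; ring
  simp only [hxj, hpx']
  rw [hT, hG, hPP, hSs m]
  have e4 : (p : ℂ) ^ s = x⁻¹ := eq_inv_of_mul_eq_one_left hxs
  have e5 : (p : ℂ) ^ (-αh) = (p * x : ℂ)⁻¹ := by
    apply eq_inv_of_mul_eq_one_left; rw [← hcx]; ring
  rw [e4, e5]
  field_simp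
  ring
end

section
/- Let A be a tuple of complex numbers with a distinguished entry α̂ satisfying ℜ(α̂ − α) < 1 for every entry α of A. Then for every prime p, G_A(1−α̂, p) = (p/(p−1)) · ( g_A(1−α̂, p) − p^{−α̂} ). -/
open Complex

/-- Let A have a distinguished entry α̂ with ℜ(α̂ − α) < 1 for every entry
α of A. Then for every prime p, G_A(1−α̂, p) = (p/(p−1)) (g_A(1−α̂, p) − p^{−α̂}). -/
theorem stmt8 (A : List ℂ) (αh : ℂ) (hmem : αh ∈ A)
    (h : ∀ α ∈ A, (αh - α).re < 1) (p : ℕ) (hp : p.Prime) :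
    GSh A (1 - αh) p
      = ((p : ℂ) / ((p : ℂ) - 1)) * (gSh A (1 - αh) p - (p : ℂ) ^ (-αh)) := by
  have hp0 : (p : ℂ) ≠ 0 := by exact_mod_cast hp.ne_zero
  have hp1 : (p : ℂ) - 1 ≠ 0 := by
    rw [sub_ne_zero]
    exact_mod_cast hp.one_lt.ne'
  have hc : ((p - 1 : ℕ) : ℂ) = (p : ℂ) - 1 := by
    rw [Nat.cast_sub hp.one_lt.le, Nat.cast_one]
  have hs : (p : ℂ) ^ (1 - αh) = (p : ℂ) * (p : ℂ) ^ (-αh) := by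
    rw [sub_eq_add_neg, Complex.cpow_add _ _ hp0, Complex.cpow_one]
  have hx : (p : ℂ) ^ (-αh) ≠ 0 := by
    rw [Ne, Complex.cpow_eq_zero_iff]
    exact fun hh => hp0 hh.1
  have hg1 : gSh A (1 - αh) 1 = 1 := by simp [gSh]
  have hpp : p * p / p = p := Nat.mul_div_cancel _ hp.pos
  have hpd : p / p = 1 := Nat.div_self hp.pos
  rw [GSh, hp.sum_divisors, hp.sum_divisors]
  simp only [Nat.divisors_one, Finset.sum_singleton, ArithmeticFunction.moebius_apply_prime hp,
    ArithmeticFunction.moebius_apply_one, Nat.totient_prime hp, Nat.totient_one, mul_one,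
    Nat.div_one, hpp, hpd, hg1, hc, hs, Nat.cast_one, Complex.one_cpow]
  push_cast
  field_simp
  ring
end

section
/- Let A be a tuple of complex numbers with a distinguished entry α̂ satisfying ℜ(α̂ − α) < 1 for every entry α of A, and let A′ be A with that entry removed. Then for every prime p and every integer d ≥ 0, G_A(1−α̂, p^d) − p^{−1+α̂} G_A(1−α̂, p^{d+1}) = ∏_{α∈A′} (1 − p^{−1+α̂−α}) · τ_{A′}(p^d). -/
open Complex

lemma cpow_pow_prime (p i : ℕ) (a : ℂ) : ((p ^ i : ℕ) : ℂ) ^ a = ((p : ℂ) ^ a) ^ i := by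
  induction i with
  | zero => simp
  | succ n ih =>
    rw [pow_succ, Nat.cast_mul, Complex.natCast_mul_natCast_cpow, ih, pow_succ]

lemma tauSh_cons_pp (a : ℂ) (A : List ℂ) (p : ℕ) (hp : p.Prime) (n : ℕ) :
    tauSh (a :: A) (p ^ n) = ∑ kl ∈ Finset.HasAntidiagonal.antidiagonal n,
      ((p : ℂ) ^ (-a)) ^ kl.1 * tauSh A (p ^ kl.2) := by
  rw [tauSh, Nat.sum_divisors_prime_pow hp, Finset.Nat.sum_antidiagonal_eq_sum_range_succ_mk]
  refine Finset.sum_congr rfl fun i hi => ?_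
  have hi' : i ≤ n := by simpa [Nat.lt_succ_iff] using hi
  rw [cpow_pow_prime, Nat.pow_div hi' hp.pos]

lemma tauSh_series (A : List ℂ) (p : ℕ) (hp : p.Prime) :
    PowerSeries.mk (fun n => tauSh A (p ^ n)) =
      (A.map (fun a => PowerSeries.mk (fun n => ((p : ℂ) ^ (-a)) ^ n))).prod := by
  induction A with
  | nil =>
    ext n
    simp [tauSh, PowerSeries.coeff_one, hp.one_lt.ne']
  | cons a A ih =>
    rw [List.map_cons, List.prod_cons, ← ih]
    ext n
    rw [PowerSeries.coeff_mul, PowerSeries.coeff_mk, tauSh_cons_pp a A p hp]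
    simp

lemma tauSh_perm {A B : List ℂ} (hAB : A.Perm B) (p : ℕ) (hp : p.Prime) (n : ℕ) :
    tauSh A (p ^ n) = tauSh B (p ^ n) := by
  have h : PowerSeries.mk (fun n => tauSh A (p ^ n)) =
      PowerSeries.mk (fun n => tauSh B (p ^ n)) := by
    rw [tauSh_series A p hp, tauSh_series B p hp]
    exact (hAB.map _).prod_eq
  simpa using congrArg (PowerSeries.coeff n) h

lemma tauSh_cons_succ (a : ℂ) (A : List ℂ) (p : ℕ) (hp : p.Prime) (n : ℕ) :
    tauSh (a :: A) (p ^ (n + 1)) =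
      tauSh A (p ^ (n + 1)) + (p : ℂ) ^ (-a) * tauSh (a :: A) (p ^ n) := by
  rw [tauSh_cons_pp a A p hp, tauSh_cons_pp a A p hp, Finset.Nat.sum_antidiagonal_succ,
    Finset.mul_sum]
  simp [pow_succ]
  refine Finset.sum_congr rfl fun i _ => by ring

lemma tauSh_sum (A : List ℂ) (p : ℕ) (hp : p.Prime) (x : ℂ)
    (hx : ∀ a ∈ A, ‖x * (p : ℂ) ^ (-a)‖ < 1) :
    Summable (fun j => ‖tauSh A (p ^ j) * x ^ j‖) ∧
      (A.map (fun a => 1 - x * (p : ℂ) ^ (-a))).prod * ∑' j, tauSh A (p ^ j) * x ^ j = 1 := by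
  induction A with
  | nil =>
    have h : ∀ j, j ≠ 0 → tauSh [] (p ^ j) * x ^ j = 0 := by
      intro j hj
      simp [tauSh, hp.one_lt.ne', hj]
    refine ⟨summable_of_ne_finset_zero (s := {0}) fun j hj => ?_, ?_⟩
    · rw [h j (by simpa using hj), norm_zero]
    · rw [tsum_eq_single 0 h]; simp [tauSh]
  | cons a A ih =>
    obtain ⟨h1, h2⟩ := ih fun b hb => hx b (List.mem_cons_of_mem _ hb)
    have hy : ‖x * (p : ℂ) ^ (-a)‖ < 1 := hx a List.mem_cons_self
    have hg : Summable (fun j : ℕ => ‖(x * (p : ℂ) ^ (-a)) ^ j‖) := by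
      simp only [norm_pow]
      exact summable_geometric_of_lt_one (norm_nonneg _) hy
    have he : ∀ n, tauSh (a :: A) (p ^ n) * x ^ n = ∑ kl ∈ Finset.HasAntidiagonal.antidiagonal n,
        (x * (p : ℂ) ^ (-a)) ^ kl.1 * (tauSh A (p ^ kl.2) * x ^ kl.2) := by
      intro n
      rw [tauSh_cons_pp a A p hp, Finset.sum_mul]
      refine Finset.sum_congr rfl fun kl hkl => ?_
      rw [← Finset.HasAntidiagonal.mem_antidiagonal.mp hkl]; ring
    have k1 := summable_norm_sum_mul_antidiagonal_of_summable_norm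
      (f := fun j : ℕ => (x * (p : ℂ) ^ (-a)) ^ j)
      (g := fun j : ℕ => tauSh A (p ^ j) * x ^ j) hg h1
    have k2 := tsum_mul_tsum_eq_tsum_sum_antidiagonal_of_summable_norm
      (f := fun j : ℕ => (x * (p : ℂ) ^ (-a)) ^ j)
      (g := fun j : ℕ => tauSh A (p ^ j) * x ^ j) hg h1
    simp only [he]
    refine ⟨k1, ?_⟩
    rw [← k2, tsum_geometric_of_norm_lt_one hy, List.map_cons, List.prod_cons]
    have hne : 1 - x * (p : ℂ) ^ (-a) ≠ 0 := by
      intro h0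
      rw [← sub_eq_zero.mp h0] at hy
      simp at hy
    rw [mul_mul_mul_comm, mul_inv_cancel₀ hne, one_mul, h2]

/-- the local factor of `gSh` -/
noncomputable def gLoc (A : List ℂ) (p : ℕ) (x : ℂ) (n : ℕ) : ℂ :=
  (A.map (fun a => 1 - x * (p : ℂ) ^ (-a))).prod * ∑' j, tauSh A (p ^ (j + n)) * x ^ j

lemma gLoc_rec (A : List ℂ) (p : ℕ) (hp : p.Prime) (x : ℂ) (hx0 : x ≠ 0)
    (hx : ∀ a ∈ A, ‖x * (p : ℂ) ^ (-a)‖ < 1) (n : ℕ) :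
    gLoc A p x n = (A.map (fun a => 1 - x * (p : ℂ) ^ (-a))).prod * tauSh A (p ^ n)
      + x * gLoc A p x (n + 1) := by
  have hs : Summable (fun j => tauSh A (p ^ (j + n)) * x ^ j) := by
    have h := (summable_nat_add_iff n).mpr (tauSh_sum A p hp x hx).1.of_norm
    refine (h.mul_right ((x ^ n)⁻¹)).congr fun j => ?_
    field_simp
    ring
  unfold gLoc
  rw [hs.tsum_eq_zero_add, mul_add, mul_left_comm x, ← tsum_mul_left (a := x)]
  congr 2
  · simp
  · refine tsum_congr fun j => ?_
    rw [show j + 1 + n = j + (n + 1) by ring]; ring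

lemma gSh_pp (A : List ℂ) (p : ℕ) (hp : p.Prime) (s : ℂ)
    (hx : ∀ a ∈ A, ‖(p : ℂ) ^ (-s) * (p : ℂ) ^ (-a)‖ < 1) (n : ℕ) :
    gSh A s (p ^ n) = gLoc A p ((p : ℂ) ^ (-s)) n := by
  have hp0 : (p : ℂ) ≠ 0 := by exact_mod_cast hp.ne_zero
  rcases Nat.eq_zero_or_pos n with rfl | hn
  · have := (tauSh_sum A p hp _ hx).2
    simp only [gSh, gLoc, pow_zero, Nat.primeFactors_one, Finset.prod_empty, add_zero]
    exact this.symm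
  · rw [gSh, Nat.primeFactors_prime_pow hn.ne' hp, Finset.prod_singleton, gLoc]
    congr 1
    · congr 1
      refine List.map_congr_left fun a _ => ?_
      rw [← Complex.cpow_add _ _ hp0]; ring_nf
    · refine tsum_congr fun j => ?_
      rw [hp.factorization_pow, Finsupp.single_eq_same, ← Complex.cpow_nat_mul]
      ring_nf

lemma GSh_pp_zero (A : List ℂ) (s : ℂ) : GSh A s 1 = 1 := by
  simp [GSh, gSh]

lemma GSh_pp_succ (A : List ℂ) (p : ℕ) (hp : p.Prime) (s : ℂ) (n : ℕ) :
    GSh A s (p ^ (n + 1)) = gSh A s (p ^ (n + 1)) -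
      1 / ((p : ℂ) - 1) * (p : ℂ) ^ s * (gSh A s (p ^ n) -
        ((p : ℂ) ^ s)⁻¹ * gSh A s (p ^ (n + 1))) := by
  rw [GSh, Nat.sum_divisors_prime_pow hp, Finset.sum_range_succ', Finset.sum_range_succ']
  rw [Finset.sum_eq_zero]
  · have h1 : p ^ (n + 1) / p = p ^ n := by
      rw [pow_succ, Nat.mul_div_cancel _ hp.pos]
    have h2 : p ^ (n + 1) * p / p = p ^ (n + 1) := Nat.mul_div_cancel _ hp.pos
    simp [hp.sum_divisors, ArithmeticFunction.moebius_apply_prime hp, Nat.totient_prime hp,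
      h1, h2, Nat.cast_sub hp.one_le]
    ring
  · intro i _
    rw [ArithmeticFunction.moebius_apply_prime_pow hp (by omega)]
    simp

theorem stmt10 (L₁ L₂ : List ℂ) (αh : ℂ)
    (h : ∀ α ∈ L₁ ++ αh :: L₂, (αh - α).re < 1)
    (p : ℕ) (hp : p.Prime) (d : ℕ) :
    GSh (L₁ ++ αh :: L₂) (1 - αh) (p ^ d)
        - (p : ℂ) ^ (-1 + αh) * GSh (L₁ ++ αh :: L₂) (1 - αh) (p ^ (d + 1))
      = ((L₁ ++ L₂).map (fun α => 1 - (p : ℂ) ^ (-1 + αh - α))).prod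
          * tauSh (L₁ ++ L₂) (p ^ d) := by
  have hp0 : (p : ℂ) ≠ 0 := by exact_mod_cast hp.ne_zero
  have hp1 : (p : ℂ) - 1 ≠ 0 := by
    rw [sub_ne_zero]; exact_mod_cast hp.one_lt.ne'
  have hperm : (L₁ ++ αh :: L₂).Perm (αh :: (L₁ ++ L₂)) := List.perm_middle
  set A := L₁ ++ αh :: L₂ with hA
  set B := L₁ ++ L₂ with hB
  have hs : -(1 - αh) = -1 + αh := by ring
  obtain ⟨x, hxdef⟩ : ∃ x, x = (p : ℂ) ^ (-1 + αh) := ⟨_, rfl⟩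
  have hx0 : x ≠ 0 := by rw [hxdef]; simp [Complex.cpow_eq_zero_iff, hp0]
  have hxa : ∀ a, (p : ℂ) ^ (-1 + αh - a) = x * (p : ℂ) ^ (-a) := by
    intro a; rw [hxdef, ← Complex.cpow_add _ _ hp0]; ring_nf
  have hx : ∀ a ∈ A, ‖x * (p : ℂ) ^ (-a)‖ < 1 := by
    intro a ha
    rw [← hxa, Complex.norm_natCast_cpow_of_pos hp.pos]
    apply Real.rpow_lt_one_of_one_lt_of_neg (by exact_mod_cast hp.one_lt)
    have := h a ha
    simp at this ⊢
    linarith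
  have hg : ∀ n, gSh A (1 - αh) (p ^ n) = gLoc A p x n := by
    intro n
    rw [gSh_pp A p hp _ (by rw [hs, ← hxdef]; exact hx), hs, ← hxdef]
  have hps : (p : ℂ) ^ (1 - αh) = x⁻¹ := by
    rw [hxdef, ← hs, Complex.cpow_neg, inv_inv]
  have hxy : x * (p : ℂ) ^ (-αh) = (p : ℂ)⁻¹ := by
    rw [← hxa, ← Complex.cpow_neg_one]; ring_nf
  have hP : (A.map (fun a => 1 - x * (p : ℂ) ^ (-a))).prod =
      (1 - (p : ℂ)⁻¹) * (B.map (fun a => 1 - x * (p : ℂ) ^ (-a))).prod := by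
    rw [(hperm.map _).prod_eq, List.map_cons, List.prod_cons, hxy]
  simp only [hxa]
  rw [← hxdef]
  have hrec := gLoc_rec A p hp x hx0 hx
  rw [hP] at hrec
  generalize (B.map (fun a => 1 - x * (p : ℂ) ^ (-a))).prod = P at *
  have hg0 : gLoc A p x 0 = 1 := by rw [← hg 0]; simp [gSh]
  have hy : (p : ℂ) ^ (-αh) = (p : ℂ)⁻¹ * x⁻¹ := by
    rw [← hxy]; field_simp
  cases d with
  | zero =>
    have h0 := hrec 0
    rw [hg0] at h0
    rw [GSh_pp_succ A p hp, hg, hg, hps, hg0, pow_zero, GSh_pp_zero, tauSh_one]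
    rw [pow_zero, tauSh_one] at h0
    have h1 : gLoc A p x (0 + 1) = (1 - (1 - (p : ℂ)⁻¹) * P) / x := by
      rw [eq_div_iff hx0]; linear_combination -h0
    rw [h1]
    field_simp
    ring
  | succ n =>
    have h0 := hrec n
    have h1 := hrec (n + 1)
    have ht : tauSh A (p ^ (n + 1)) = tauSh B (p ^ (n + 1))
        + (p : ℂ)⁻¹ * x⁻¹ * tauSh A (p ^ n) := by
      rw [tauSh_perm hperm p hp, tauSh_perm hperm p hp, tauSh_cons_succ αh B p hp, hy]
    rw [GSh_pp_succ A p hp, GSh_pp_succ A p hp, hg, hg, hg, hps]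
    rw [ht] at h1
    rw [h0]
    have h2 : gLoc A p x (n + 1 + 1) = (gLoc A p x (n + 1) - (1 - (p : ℂ)⁻¹) * P *
      (tauSh B (p ^ (n + 1)) + (p : ℂ)⁻¹ * x⁻¹ * tauSh A (p ^ n))) / x := by
      rw [eq_div_iff hx0]; linear_combination -h1
    rw [h2]
    field_simp
    ring
end

section
/- Let A′ and B′ be tuples of complex numbers and β̂ a complex number, all of whose real parts have absolute value less than 1/4, and let p be a prime. Then Σ_{d≥0} (τ_{A′}(p^d)/p^d) Σ_{j≥0} τ_{B′}(p^{j+d}) p^{−j(1−β̂)} = Σ_{r≥0} τ_{B′}(p^r) τ_{A′∪{−β̂}}(p^r) p^{−r}, both double series converging absolutely. -/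
open Complex

lemma aux_cast_pow (p : ℕ) (i : ℕ) (a : ℂ) :
    ((p ^ i : ℕ) : ℂ) ^ a = ((p : ℂ) ^ a) ^ i := by
  induction i with
  | zero => simp
  | succ n ih =>
    rw [pow_succ, pow_succ, ← ih, Nat.cast_mul, Complex.natCast_mul_natCast_cpow]

lemma aux_cons (p : ℕ) (hp : p.Prime) (a : ℂ) (A : List ℂ) (n : ℕ) :
    tauSh (a :: A) (p ^ n) =
      ∑ x ∈ Finset.HasAntidiagonal.antidiagonal n, ((p : ℂ) ^ (-a)) ^ x.1 * tauSh A (p ^ x.2) := by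
  rw [Finset.Nat.sum_antidiagonal_eq_sum_range_succ
    (fun i j => ((p : ℂ) ^ (-a)) ^ i * tauSh A (p ^ j))]
  rw [tauSh, Nat.divisors_prime_pow hp, Finset.sum_map]
  refine Finset.sum_congr rfl fun i hi => ?_
  have hi' : i ≤ n := by simpa [Nat.lt_succ_iff] using hi
  simp only [Function.Embedding.coeFn_mk]
  rw [aux_cast_pow, Nat.pow_div hi' hp.pos]

/-- generating series at the prime p -/
noncomputable def auxPS (p : ℕ) (A : List ℂ) : PowerSeries ℂ :=
  PowerSeries.mk fun n => tauSh A (p ^ n)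

lemma auxPS_cons (p : ℕ) (hp : p.Prime) (a : ℂ) (A : List ℂ) :
    auxPS p (a :: A) = PowerSeries.mk (fun n => ((p : ℂ) ^ (-a)) ^ n) * auxPS p A := by
  ext n
  simp [auxPS, PowerSeries.coeff_mul, aux_cons p hp]

lemma auxPS_nil (p : ℕ) (hp : p.Prime) : auxPS p [] = 1 := by
  ext n
  simp [auxPS, PowerSeries.coeff_one, tauSh, hp.ne_one]

lemma auxPS_append (p : ℕ) (hp : p.Prime) (c : ℂ) (A : List ℂ) :
    auxPS p (A ++ [c]) = auxPS p A * PowerSeries.mk (fun n => ((p : ℂ) ^ (-c)) ^ n) := by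
  induction A with
  | nil => simp [auxPS_cons p hp, auxPS_nil p hp]
  | cons a A ih => rw [List.cons_append, auxPS_cons p hp, ih, auxPS_cons p hp, mul_assoc]

lemma aux_append (p : ℕ) (hp : p.Prime) (c : ℂ) (A : List ℂ) (n : ℕ) :
    tauSh (A ++ [c]) (p ^ n) =
      ∑ x ∈ Finset.HasAntidiagonal.antidiagonal n, tauSh A (p ^ x.1) * ((p : ℂ) ^ (-c)) ^ x.2 := by
  have := congrArg (PowerSeries.coeff n) (auxPS_append p hp c A)
  simpa [auxPS, PowerSeries.coeff_mul] using this

lemma aux_norm (p : ℕ) (hp : p.Prime) (a : ℂ) (ha : |a.re| < 1/4) :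
    ‖(p : ℂ) ^ a‖ ≤ (p : ℝ) ^ (1/4 : ℝ) := by
  rw [Complex.norm_natCast_cpow_of_pos hp.pos]
  exact Real.rpow_le_rpow_of_exponent_le (by exact_mod_cast hp.one_le)
    ((le_abs_self _).trans ha.le)

lemma aux_bound (p : ℕ) (hp : p.Prime) (A : List ℂ) (hA : ∀ α ∈ A, |α.re| < 1/4) (n : ℕ) :
    ‖tauSh A (p ^ n)‖ ≤ ((n : ℝ) + 1) ^ A.length * ((p : ℝ) ^ (1/4 : ℝ)) ^ n := by
  induction A generalizing n with
  | nil =>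
    by_cases h : n = 0
    · simp [tauSh, h]
    · have h' : p ^ n ≠ 1 := (Nat.one_lt_pow h hp.one_lt).ne'
      rw [tauSh, if_neg h', norm_zero]
      positivity
  | cons a A ih =>
    rw [aux_cons p hp]
    refine (norm_sum_le _ _).trans ?_
    have key : ∀ x ∈ Finset.HasAntidiagonal.antidiagonal n,
        ‖((p : ℂ) ^ (-a)) ^ x.1 * tauSh A (p ^ x.2)‖ ≤
          ((n : ℝ) + 1) ^ A.length * ((p : ℝ) ^ (1/4 : ℝ)) ^ n := by
      rintro ⟨i, j⟩ hx
      have hij : i + j = n := by simpa using hx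
      have h1 := aux_norm p hp (-a) (by simpa using hA a (by simp))
      have h2 := ih (fun α h => hA α (by simp [h])) j
      rw [norm_mul, norm_pow]
      calc ‖(p : ℂ) ^ (-a)‖ ^ i * ‖tauSh A (p ^ j)‖
          ≤ ((p : ℝ) ^ (1/4 : ℝ)) ^ i *
            (((j : ℝ) + 1) ^ A.length * ((p : ℝ) ^ (1/4 : ℝ)) ^ j) := by gcongr
        _ = ((j : ℝ) + 1) ^ A.length * ((p : ℝ) ^ (1/4 : ℝ)) ^ n := by
            rw [← hij, pow_add]; ring
        _ ≤ _ := by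
            gcongr
            omega
    refine (Finset.sum_le_card_nsmul _ _ _ key).trans (le_of_eq ?_)
    simp only [Finset.Nat.card_antidiagonal, nsmul_eq_mul, List.length_cons]
    push_cast
    ring

lemma aux_summable (k : ℕ) (x : ℝ) (h0 : 0 ≤ x) (h1 : x < 1) :
    Summable fun n : ℕ => ((n : ℝ) + 1) ^ k * x ^ n := by
  rcases h0.eq_or_lt with rfl | h0
  · refine summable_of_ne_finset_zero (s := {0}) fun n hn => ?_
    have : n ≠ 0 := by simpa using hn
    simp [this]
  · have := (summable_nat_add_iff 1).2
      (summable_pow_mul_geometric_of_norm_lt_one (R := ℝ) k (r := x)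
        (by rwa [Real.norm_of_nonneg h0.le]))
    refine (this.mul_right x⁻¹).congr fun n => ?_
    push_cast
    field_simp
    ring

lemma aux_q (p : ℕ) (hp : p.Prime) (n : ℕ) :
    ((p : ℝ) ^ (1/4 : ℝ)) ^ n * ((p : ℝ) ^ (1/4 : ℝ)) ^ n / (p : ℝ) ^ n =
      ((p : ℝ) ^ (-(1/2) : ℝ)) ^ n := by
  have hp0 : (0 : ℝ) < p := by exact_mod_cast hp.pos
  rw [← mul_pow, ← div_pow, ← Real.rpow_add hp0]
  congr 1
  nth_rewrite 2 [← Real.rpow_one (p : ℝ)]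
  rw [← Real.rpow_sub hp0]
  norm_num

lemma aux_q_lt (p : ℕ) (hp : p.Prime) : (p : ℝ) ^ (-(1/2) : ℝ) < 1 :=
  Real.rpow_lt_one_of_one_lt_of_neg (by exact_mod_cast hp.one_lt) (by norm_num)

lemma aux_exp (p : ℕ) (hp : p.Prime) (b : ℂ) (j : ℕ) :
    (p : ℂ) ^ (-(j : ℂ) * (1 - b)) = ((p : ℂ) ^ b) ^ j / (p : ℂ) ^ j := by
  have hp0 : (p : ℂ) ≠ 0 := by exact_mod_cast hp.ne_zero
  rw [show -(j : ℂ) * (1 - b) = (j : ℂ) * b - (j : ℂ) by ring, Complex.cpow_sub _ _ hp0,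
    Complex.cpow_nat_mul, Complex.cpow_natCast]

/-- For tuples A′, B′ and a number β̂, all real parts of absolute value
< 1/4, and a prime p,
Σ_{d≥0} (τ_{A′}(p^d)/p^d) Σ_{j≥0} τ_{B′}(p^{j+d}) p^{−j(1−β̂)}
  = Σ_{r≥0} τ_{B′}(p^r) τ_{A′∪{−β̂}}(p^r) p^{−r},
both double series converging absolutely. -/
theorem stmt11 (A' B' : List ℂ) (βh : ℂ)
    (hA : ∀ α ∈ A', |α.re| < 1/4) (hB : ∀ β ∈ B', |β.re| < 1/4) (hβ : |βh.re| < 1/4)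
    (p : ℕ) (hp : p.Prime) :
    Summable (fun x : ℕ × ℕ =>
      ‖tauSh A' (p ^ x.1) / (p : ℂ) ^ x.1 *
        (tauSh B' (p ^ (x.2 + x.1)) * (p : ℂ) ^ (-(x.2 : ℂ) * (1 - βh)))‖) ∧
    Summable (fun r : ℕ =>
      ‖tauSh B' (p ^ r) * tauSh (A' ++ [-βh]) (p ^ r) / (p : ℂ) ^ r‖) ∧
    ∑' d : ℕ, tauSh A' (p ^ d) / (p : ℂ) ^ d *
        ∑' j : ℕ, tauSh B' (p ^ (j + d)) * (p : ℂ) ^ (-(j : ℂ) * (1 - βh))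
      = ∑' r : ℕ, tauSh B' (p ^ r) * tauSh (A' ++ [-βh]) (p ^ r) / (p : ℂ) ^ r := by
  have hp0 : (0 : ℝ) < p := by exact_mod_cast hp.pos
  have hq0 : (0 : ℝ) ≤ (p : ℝ) ^ (-(1/2) : ℝ) := by positivity
  have S1 : Summable (fun x : ℕ × ℕ =>
      ‖tauSh A' (p ^ x.1) / (p : ℂ) ^ x.1 *
        (tauSh B' (p ^ (x.2 + x.1)) * (p : ℂ) ^ (-(x.2 : ℂ) * (1 - βh)))‖) := by
    have hs := (aux_summable (A'.length + B'.length) _ hq0 (aux_q_lt p hp)).mul_of_nonneg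
      (aux_summable B'.length _ hq0 (aux_q_lt p hp))
      (fun n => by positivity) (fun n => by positivity)
    refine Summable.of_nonneg_of_le (fun _ => norm_nonneg _) ?_ hs
    rintro ⟨d, j⟩
    simp only [aux_exp p hp, norm_mul, norm_div, norm_pow, Complex.norm_natCast]
    have h1 := aux_bound p hp A' hA d
    have h2 := aux_bound p hp B' hB (j + d)
    have h3 := aux_norm p hp βh hβ
    have h4 : (((j + d : ℕ) : ℝ) + 1) ^ B'.length ≤
        ((d : ℝ) + 1) ^ B'.length * ((j : ℝ) + 1) ^ B'.length := by
      rw [← mul_pow]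
      gcongr
      push_cast
      nlinarith [mul_nonneg (Nat.cast_nonneg (α := ℝ) d) (Nat.cast_nonneg (α := ℝ) j)]
    have h5 : ‖tauSh B' (p ^ (j + d))‖ ≤
        ((d : ℝ) + 1) ^ B'.length * ((j : ℝ) + 1) ^ B'.length *
          ((p : ℝ) ^ (1/4 : ℝ)) ^ (j + d) := h2.trans (by gcongr)
    calc _ ≤ (((d : ℝ) + 1) ^ A'.length * ((p : ℝ) ^ (1/4 : ℝ)) ^ d) / (p : ℝ) ^ d *
          ((((d : ℝ) + 1) ^ B'.length * ((j : ℝ) + 1) ^ B'.length *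
          ((p : ℝ) ^ (1/4 : ℝ)) ^ (j + d)) *
            (((p : ℝ) ^ (1/4 : ℝ)) ^ j / (p : ℝ) ^ j)) := by gcongr
      _ = _ := by
        rw [← aux_q p hp d, ← aux_q p hp j]
        ring
  refine ⟨S1, ?_, ?_⟩
  · refine Summable.of_nonneg_of_le (fun _ => norm_nonneg _) ?_
      (aux_summable (B'.length + (A' ++ [-βh]).length) _ hq0 (aux_q_lt p hp))
    intro r
    simp only [norm_mul, norm_div, norm_pow, Complex.norm_natCast]
    have h1 := aux_bound p hp (A' ++ [-βh]) (by
      intro α h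
      rcases List.mem_append.1 h with h | h
      · exact hA α h
      · rw [List.mem_singleton.1 h]
        simpa using hβ) r
    have h2 := aux_bound p hp B' hB r
    calc _ ≤ (((r : ℝ) + 1) ^ B'.length * ((p : ℝ) ^ (1/4 : ℝ)) ^ r) *
          (((r : ℝ) + 1) ^ (A' ++ [-βh]).length * ((p : ℝ) ^ (1/4 : ℝ)) ^ r) / (p : ℝ) ^ r := by
            gcongr
      _ = _ := by
        rw [← aux_q p hp r]
        ring
  · have S := S1.of_norm
    simp_rw [← tsum_mul_left]
    rw [← S.tsum_prod, ← Finset.HasAntidiagonal.sigmaAntidiagonalEquivProd.tsum_eq]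
    refine (((Finset.HasAntidiagonal.sigmaAntidiagonalEquivProd (A := ℕ)).summable_iff.2 S).tsum_sigma).trans ?_
    refine tsum_congr fun r => ?_
    rw [tsum_fintype, aux_append p hp, Finset.mul_sum, Finset.sum_div]
    refine Eq.trans ?_ (Finset.sum_coe_sort (Finset.HasAntidiagonal.antidiagonal r) _)
    refine Fintype.sum_congr _ _ ?_
    rintro ⟨⟨d, j⟩, hx⟩
    have hdj : d + j = r := by simpa using hx
    simp only [Function.comp_apply, Finset.HasAntidiagonal.sigmaAntidiagonalEquivProd_apply, aux_exp p hp, neg_neg]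
    rw [add_comm j d, hdj, ← hdj, pow_add (p : ℂ)]
    ring
end

section
/- Let A′ and B′ be tuples of complex numbers and α̂, β̂ complex numbers, all of whose real parts have absolute value less than 1/4, and let p be a prime. Then Σ_{r≥0} [ τ_{B′}(p^r) τ_{A′∪{−β̂}}(p^r) + τ_{A′}(p^r) τ_{B′∪{−α̂}}(p^r) − τ_{A′}(p^r) τ_{B′}(p^r) ] p^{−r} = (1 − p^{−1+α̂+β̂}) Σ_{r≥0} τ_{A′∪{−β̂}}(p^r) τ_{B′∪{−α̂}}(p^r) p^{−r}, both series converging absolutely. -/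
open Complex

open PowerSeries in
noncomputable def tgeo (p : ℕ) (a : ℂ) : PowerSeries ℂ := PowerSeries.mk fun n => ((p : ℂ) ^ (-a)) ^ n

noncomputable def tser (p : ℕ) (A : List ℂ) : PowerSeries ℂ := PowerSeries.mk fun n => tauSh A (p ^ n)

lemma natpow_cpow (p k : ℕ) (a : ℂ) : (((p ^ k : ℕ)) : ℂ) ^ (-a) = ((p : ℂ) ^ (-a)) ^ k := by
  induction k with
  | zero => simp
  | succ k ih => rw [pow_succ, Nat.cast_mul, Complex.natCast_mul_natCast_cpow, ih, pow_succ]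

lemma tauSh_cons_pow (p : ℕ) (hp : p.Prime) (a : ℂ) (A : List ℂ) (n : ℕ) :
    tauSh (a :: A) (p ^ n) =
      ∑ k ∈ Finset.range (n + 1), ((p : ℂ) ^ (-a)) ^ k * tauSh A (p ^ (n - k)) := by
  rw [tauSh, Nat.divisors_prime_pow hp, Finset.sum_map]
  refine Finset.sum_congr rfl fun k hk => ?_
  have hk' : k ≤ n := by simpa [Nat.lt_succ_iff] using hk
  simp only [Function.Embedding.coeFn_mk]
  rw [natpow_cpow, Nat.pow_div hk' hp.pos]

lemma tser_cons (p : ℕ) (hp : p.Prime) (a : ℂ) (A : List ℂ) :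
    tser p (a :: A) = tgeo p a * tser p A := by
  ext n
  rw [PowerSeries.coeff_mul, Finset.Nat.sum_antidiagonal_eq_sum_range_succ_mk]
  simp only [tser, tgeo, PowerSeries.coeff_mk]
  exact tauSh_cons_pow p hp a A n

lemma tser_nil (p : ℕ) (hp : p.Prime) : tser p [] = 1 := by
  ext n
  simp only [tser, PowerSeries.coeff_mk, PowerSeries.coeff_one, tauSh, Nat.pow_eq_one,
    hp.ne_one, false_or]

lemma tser_append (p : ℕ) (hp : p.Prime) (c : ℂ) (A : List ℂ) :
    tser p (A ++ [c]) = tgeo p c * tser p A := by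
  induction A with
  | nil => rw [List.nil_append, tser_cons p hp]
  | cons a A ih => rw [List.cons_append, tser_cons p hp, tser_cons p hp, ih]; ring

lemma tgeo_eq (p : ℕ) (c : ℂ) :
    tgeo p c = 1 + PowerSeries.C ((p : ℂ) ^ (-c)) * (tgeo p c * PowerSeries.X) := by
  ext n
  rw [map_add, PowerSeries.coeff_C_mul]
  cases n with
  | zero => simp [tgeo]
  | succ n =>
    rw [PowerSeries.coeff_succ_mul_X]
    simp [tgeo, PowerSeries.coeff_one, pow_succ, mul_comm]

lemma tauSh_app_succ (p : ℕ) (hp : p.Prime) (c : ℂ) (A : List ℂ) (n : ℕ) :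
    tauSh (A ++ [c]) (p ^ (n + 1)) =
      tauSh A (p ^ (n + 1)) + (p : ℂ) ^ (-c) * tauSh (A ++ [c]) (p ^ n) := by
  have h : tser p (A ++ [c]) =
      tser p A + PowerSeries.C ((p : ℂ) ^ (-c)) * (tser p (A ++ [c]) * PowerSeries.X) := by
    rw [tser_append p hp]
    conv_lhs => rw [tgeo_eq]
    ring
  have h2 := congrArg (PowerSeries.coeff (n + 1)) h
  rw [map_add, PowerSeries.coeff_C_mul, PowerSeries.coeff_succ_mul_X] at h2
  simpa only [tser, PowerSeries.coeff_mk] using h2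

lemma tau_summable (p : ℕ) (hp : p.Prime) (A : List ℂ) (hA : ∀ a ∈ A, |a.re| < 1 / 4) :
    Summable fun n : ℕ => ‖tauSh A (p ^ n) * ((p : ℂ) ^ (-(1 / 2) : ℂ)) ^ n‖ := by
  induction A with
  | nil =>
    refine summable_of_ne_finset_zero (s := {0}) fun n hn => ?_
    have hn : n ≠ 0 := by simpa using hn
    simp [tauSh, hp.ne_one, hn]
  | cons a A ih =>
    have ih := ih fun b hb => hA b (List.mem_cons_of_mem _ hb)
    have ha := abs_lt.1 (hA a List.mem_cons_self)
    set z : ℂ := (p : ℂ) ^ (-(1 / 2) : ℂ)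
    have hg : Summable fun n : ℕ => ‖((p : ℂ) ^ (-a) * z) ^ n‖ := by
      simp only [norm_pow]
      refine summable_geometric_of_lt_one (norm_nonneg _) ?_
      have hp0 : (p : ℂ) ≠ 0 := by exact_mod_cast hp.ne_zero
      rw [← Complex.cpow_add _ _ hp0, Complex.norm_natCast_cpow_of_pos hp.pos]
      refine Real.rpow_lt_one_of_one_lt_of_neg (by exact_mod_cast hp.one_lt) ?_
      simp
      linarith
    refine (summable_norm_sum_mul_range_of_summable_norm hg ih).congr fun n => ?_
    rw [tauSh_cons_pow p hp, Finset.sum_mul]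
    congr 1
    refine Finset.sum_congr rfl fun k hk => ?_
    have hk' : k ≤ n := by simpa [Nat.lt_succ_iff] using hk
    obtain ⟨m, rfl⟩ := Nat.exists_eq_add_of_le hk'
    rw [Nat.add_sub_cancel_left, mul_pow, pow_add]
    ring

lemma tau_prod_summable (p : ℕ) (hp : p.Prime) (A B : List ℂ) (hA : ∀ a ∈ A, |a.re| < 1 / 4)
    (hB : ∀ a ∈ B, |a.re| < 1 / 4) :
    Summable fun n : ℕ => ‖tauSh A (p ^ n) * tauSh B (p ^ n) / (p : ℂ) ^ n‖ := by
  have h := (tau_summable p hp A hA).mul_norm (tau_summable p hp B hB)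
  have hi : Function.Injective fun n : ℕ => (n, n) := fun a b h => (Prod.mk.inj h).1
  refine (h.comp_injective hi).congr fun n => ?_
  have hp0 : (p : ℂ) ≠ 0 := by exact_mod_cast hp.ne_zero
  have hz : (p : ℂ) ^ (-(1 / 2) : ℂ) * (p : ℂ) ^ (-(1 / 2) : ℂ) = (p : ℂ)⁻¹ := by
    rw [← Complex.cpow_add _ _ hp0, ← Complex.cpow_neg_one]; norm_num
  simp only [Function.comp_apply]
  rw [div_eq_mul_inv (_ * _) ((p : ℂ) ^ n), ← inv_pow, ← hz, mul_pow]
  congr 1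
  ring

/-- For tuples A′, B′ and numbers α̂, β̂, all real parts of absolute
value < 1/4, and a prime p,
Σ_{r≥0} [ τ_{B′}τ_{A′∪{−β̂}} + τ_{A′}τ_{B′∪{−α̂}} − τ_{A′}τ_{B′} ](p^r) p^{−r}
  = (1 − p^{−1+α̂+β̂}) Σ_{r≥0} τ_{A′∪{−β̂}}(p^r) τ_{B′∪{−α̂}}(p^r) p^{−r},
both series converging absolutely. -/
theorem stmt13 (A' B' : List ℂ) (αh βh : ℂ)
    (hA : ∀ α ∈ A', |α.re| < 1/4) (hB : ∀ β ∈ B', |β.re| < 1/4)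
    (hα : |αh.re| < 1/4) (hβ : |βh.re| < 1/4) (p : ℕ) (hp : p.Prime) :
    Summable (fun r : ℕ =>
      ‖(tauSh B' (p ^ r) * tauSh (A' ++ [-βh]) (p ^ r)
          + tauSh A' (p ^ r) * tauSh (B' ++ [-αh]) (p ^ r)
          - tauSh A' (p ^ r) * tauSh B' (p ^ r)) / (p : ℂ) ^ r‖) ∧
    Summable (fun r : ℕ =>
      ‖tauSh (A' ++ [-βh]) (p ^ r) * tauSh (B' ++ [-αh]) (p ^ r) / (p : ℂ) ^ r‖) ∧
    ∑' r : ℕ, (tauSh B' (p ^ r) * tauSh (A' ++ [-βh]) (p ^ r)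
          + tauSh A' (p ^ r) * tauSh (B' ++ [-αh]) (p ^ r)
          - tauSh A' (p ^ r) * tauSh B' (p ^ r)) / (p : ℂ) ^ r
      = (1 - (p : ℂ) ^ (-1 + αh + βh)) *
          ∑' r : ℕ, tauSh (A' ++ [-βh]) (p ^ r) * tauSh (B' ++ [-αh]) (p ^ r) / (p : ℂ) ^ r := by
  have hA' : ∀ a ∈ A' ++ [-βh], |a.re| < 1 / 4 := by
    intro a ha
    rcases List.mem_append.1 ha with h | h
    · exact hA a h
    · rw [List.mem_singleton.1 h]; simpa using hβ
  have hB' : ∀ a ∈ B' ++ [-αh], |a.re| < 1 / 4 := by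
    intro a ha
    rcases List.mem_append.1 ha with h | h
    · exact hB a h
    · rw [List.mem_singleton.1 h]; simpa using hα
  have s1 := tau_prod_summable p hp B' (A' ++ [-βh]) hB hA'
  have s2 := tau_prod_summable p hp A' (B' ++ [-αh]) hA hB'
  have s3 := tau_prod_summable p hp A' B' hA hB
  have s4 := tau_prod_summable p hp (A' ++ [-βh]) (B' ++ [-αh]) hA' hB'
  have s5 : Summable (fun r : ℕ =>
      ‖(tauSh B' (p ^ r) * tauSh (A' ++ [-βh]) (p ^ r)
          + tauSh A' (p ^ r) * tauSh (B' ++ [-αh]) (p ^ r)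
          - tauSh A' (p ^ r) * tauSh B' (p ^ r)) / (p : ℂ) ^ r‖) := by
    refine Summable.of_nonneg_of_le (fun _ => norm_nonneg _) (fun r => ?_) ((s1.add s2).add s3)
    rw [sub_div, add_div]
    exact (norm_sub_le _ _).trans (by gcongr; exact norm_add_le _ _)
  refine ⟨s5, s4, ?_⟩
  have hp0 : (p : ℂ) ≠ 0 := by exact_mod_cast hp.ne_zero
  have hz : (p : ℂ) ^ (-1 + αh + βh) = (p : ℂ)⁻¹ * (p : ℂ) ^ αh * (p : ℂ) ^ βh := by
    rw [Complex.cpow_add _ _ hp0, Complex.cpow_add _ _ hp0, Complex.cpow_neg_one]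
  rw [s5.of_norm.tsum_eq_zero_add, sub_mul, one_mul]
  nth_rewrite 1 [s4.of_norm.tsum_eq_zero_add]
  have s6 := (summable_nat_add_iff 1).2 s4.of_norm
  rw [← tsum_mul_left, add_sub_assoc (_ / _) (∑' _, _), ← s6.tsum_sub (s4.of_norm.mul_left _)]
  simp only [pow_zero, tauSh_one]
  congr 1
  · norm_num
  refine tsum_congr fun r => ?_
  rw [tauSh_app_succ p hp, tauSh_app_succ p hp, hz, neg_neg, neg_neg]
  have hpr : (p : ℂ) ^ r ≠ 0 := pow_ne_zero _ hp0
  rw [pow_succ (p : ℂ) r]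
  field_simp
  ring
end

section
/- Let A and B be tuples of complex numbers all of whose entries have real part of absolute value less than 1/4, with distinguished entries α̂ of A and β̂ of B, and write A′ = A minus α̂, B′ = B minus β̂. Then for every prime p, ∏_{α∈A′}(1 − p^{−1+α̂−α}) · ∏_{β∈B′}(1 − p^{−1+β̂−β}) · (1 − p^{−1+α̂+β̂}) · Σ_{j≥0} τ_{A′∪{−β̂}}(p^j) τ_{B′∪{−α̂}}(p^j) p^{−j} = Σ_{d≥0} Σ_{q=0}^{1} (−1)^q G_A(1−α̂, p^{d+q}) G_B(1−β̂, p^{d+q}) p^{−d − q(2−α̂−β̂)}, all series converging absolutely. -/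
open Complex

namespace S14

/-- Abstract telescoping identity. -/
lemma telescope (a b X Y S T : ℕ → ℂ) (u v P w : ℂ) (hw : P * w = 1)
    (hX0 : X 0 = a 0) (hY0 : Y 0 = b 0)
    (hX : ∀ n, X (n+1) = a (n+1) + P * v * X n)
    (hY : ∀ n, Y (n+1) = b (n+1) + P * u * Y n)
    (hS : ∀ n, S n = a n + u * S (n+1)) (hT : ∀ n, T n = b n + v * T (n+1)) (n : ℕ) :
    ∑ d ∈ Finset.range (n+1), (w^d * (S d * T d - u * v * (S (d+1) * T (d+1)))) =
      ∑ d ∈ Finset.range (n+1), ((1 - P*u*v) * (X d * Y d * w^d)) +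
        w^n * (Y n * (u * S (n+1)) + X n * (v * T (n+1)) + P*u*v * (X n * Y n)) := by
  induction n with
  | zero =>
    simp only [zero_add, Finset.sum_range_one, pow_zero]
    rw [hX0, hY0, hS 0, hT 0]
    ring
  | succ n ih =>
    rw [Finset.sum_range_succ, ih, Finset.sum_range_succ (n := n+1)]
    rw [hX n, hY n, hS (n+1), hT (n+1)]
    have h : w^n = w^(n+1) * P := by rw [pow_succ, mul_assoc, mul_comm w P, hw, mul_one]
    rw [h]
    ring

lemma geom_bound {f : ℕ → ℂ} {C r : ℝ} (hr0 : 0 ≤ r) (hr : r < 1) (h : ∀ n, ‖f n‖ ≤ C * r^n) :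
    Summable (fun n => ‖f n‖) :=
  Summable.of_nonneg_of_le (fun _ => norm_nonneg _) h
    ((summable_geometric_of_lt_one hr0 hr).mul_left C)

lemma prod_bound {x y z : ℂ} {C D R W : ℝ} {n : ℕ} (_hR : 0 ≤ R)
    (hx : ‖x‖ ≤ C * R^n) (hy : ‖y‖ ≤ D * R^n) (hz : ‖z‖ = W) :
    ‖x * y * z^n‖ ≤ C * D * (R^2*W)^n := by
  rw [norm_mul, norm_mul, norm_pow, hz]
  have hW : 0 ≤ W := hz ▸ norm_nonneg z
  calc ‖x‖ * ‖y‖ * W^n ≤ (C * R^n) * (D * R^n) * W^n := by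
        gcongr
        exact (norm_nonneg _).trans hx
    _ = _ := by rw [mul_pow, ← pow_mul, mul_comm 2 n, pow_mul]; ring

lemma main_abs (a b X Y S T : ℕ → ℂ) (u v P w : ℂ) (hw : P * w = 1)
    (hX0 : X 0 = a 0) (hY0 : Y 0 = b 0)
    (hX : ∀ n, X (n+1) = a (n+1) + P * v * X n)
    (hY : ∀ n, Y (n+1) = b (n+1) + P * u * Y n)
    (hS : ∀ n, S n = a n + u * S (n+1)) (hT : ∀ n, T n = b n + v * T (n+1))
    (R : ℝ) (hR : 0 ≤ R) (hRw : R^2 * ‖w‖ < 1) (CX CY CS CT : ℝ)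
    (bX : ∀ n, ‖X n‖ ≤ CX * R^n) (bY : ∀ n, ‖Y n‖ ≤ CY * R^n)
    (bS : ∀ n, ‖S n‖ ≤ CS * R^n) (bT : ∀ n, ‖T n‖ ≤ CT * R^n) :
    Summable (fun n => ‖X n * Y n * w^n‖) ∧ Summable (fun n => ‖S n * T n * w^n‖) ∧
    Summable (fun n => ‖S (n+1) * T (n+1) * w^n‖) ∧
    (1 - P*u*v) * ∑' n, X n * Y n * w^n =
      ∑' d, (w^d * (S d * T d - u * v * (S (d+1) * T (d+1)))) := by
  have r0 : 0 ≤ R^2 * ‖w‖ := by positivity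
  have bS' : ∀ n, ‖S (n+1)‖ ≤ (CS * R) * R^n := fun n => (bS (n+1)).trans_eq (by ring)
  have bT' : ∀ n, ‖T (n+1)‖ ≤ (CT * R) * R^n := fun n => (bT (n+1)).trans_eq (by ring)
  have s1 := geom_bound r0 hRw (fun n => prod_bound hR (bX n) (bY n) rfl)
  have s2 := geom_bound r0 hRw (fun n => prod_bound hR (bS n) (bT n) rfl)
  have s3 := geom_bound r0 hRw (fun n => prod_bound hR (bS' n) (bT' n) rfl)
  have s4 := geom_bound r0 hRw (fun n => prod_bound hR (bY n) (bS' n) rfl)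
  have s5 := geom_bound r0 hRw (fun n => prod_bound hR (bX n) (bT' n) rfl)
  refine ⟨s1, s2, s3, ?_⟩
  have t1 := s1.of_norm.tendsto_atTop_zero
  have t4 := s4.of_norm.tendsto_atTop_zero
  have t5 := s5.of_norm.tendsto_atTop_zero
  have hF : Summable (fun d => w^d * (S d * T d - u * v * (S (d+1) * T (d+1)))) := by
    refine (s2.of_norm.sub (s3.of_norm.mul_left (u*v))).congr (fun n => ?_)
    ring
  have hL := (s1.of_norm.mul_left (1 - P*u*v)).hasSum.tendsto_sum_nat.comp (Filter.tendsto_add_atTop_nat 1)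
  have hRr := hF.hasSum.tendsto_sum_nat.comp (Filter.tendsto_add_atTop_nat 1)
  have hE : Filter.Tendsto (fun n => w^n * (Y n * (u * S (n+1)) + X n * (v * T (n+1)) + P*u*v * (X n * Y n)))
      Filter.atTop (nhds 0) := by
    have := ((t4.const_mul u).add (t5.const_mul v)).add (t1.const_mul (P*u*v))
    simp only [mul_zero, add_zero] at this
    refine this.congr (fun n => ?_)
    ring
  have h2 := hL.add hE
  rw [add_zero, tsum_mul_left] at h2
  refine tendsto_nhds_unique h2 (hRr.congr (fun n => ?_))
  simp only [Function.comp]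
  exact telescope a b X Y S T u v P w hw hX0 hY0 hX hY hS hT n

lemma cpow_pow (p k : ℕ) (s : ℂ) : ((p^k : ℕ) : ℂ)^s = ((p:ℂ)^s)^k := by
  rw [Nat.cast_pow, ← Complex.natCast_cpow_natCast_mul, ← Complex.cpow_nat_mul]

lemma tau_zero (A : List ℂ) (p : ℕ) : tauSh A (p^0) = 1 := by
  induction A with
  | nil => simp [tauSh]
  | cons a A ih => simp at ih; simp [tauSh, ih]

lemma tau_cons (a : ℂ) (A : List ℂ) {p : ℕ} (hp : p.Prime) (n : ℕ) :
    tauSh (a :: A) (p^(n+1)) = tauSh A (p^(n+1)) + (p:ℂ)^(-a) * tauSh (a :: A) (p^n) := by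
  have h : ∀ m, tauSh (a :: A) (p^m) =
      ∑ k ∈ Finset.range (m+1), ((p:ℂ)^(-a))^k * tauSh A (p^(m-k)) := by
    intro m
    rw [tauSh, Nat.sum_divisors_prime_pow hp]
    refine Finset.sum_congr rfl (fun k hk => ?_)
    rw [cpow_pow, Nat.pow_div (by simpa [Nat.lt_succ_iff] using hk) hp.pos]
  rw [h, h, Finset.sum_range_succ', Finset.mul_sum, add_comm]
  congr 1
  · simp
  · refine Finset.sum_congr rfl (fun k hk => ?_)
    rw [pow_succ, Nat.add_sub_add_right]; ring

lemma tau_mid (L₁ L₂ : List ℂ) (a : ℂ) {p : ℕ} (hp : p.Prime) (n : ℕ) :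
    tauSh (L₁ ++ a :: L₂) (p^(n+1)) =
      tauSh (L₁ ++ L₂) (p^(n+1)) + (p:ℂ)^(-a) * tauSh (L₁ ++ a :: L₂) (p^n) := by
  induction L₁ generalizing n with
  | nil => exact tau_cons a L₂ hp n
  | cons b L ih =>
    simp only [List.cons_append]
    induction n with
    | zero =>
      rw [tau_cons b _ hp, tau_cons b _ hp, ih]
      simp only [tau_zero]; ring
    | succ n ihn =>
      rw [tau_cons b _ hp (n+1), tau_cons b _ hp (n+1), ih (n+1), ihn]
      have := tau_cons b (L ++ a :: L₂) hp n
      rw [eq_sub_of_add_eq this.symm]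
      rw [ihn]
      ring

lemma tau_bound (A : List ℂ) {p : ℕ} (hp : p.Prime) (R : ℝ) (hR : 0 < R)
    (hA : ∀ a ∈ A, ‖(p:ℂ)^(-a)‖ < R) : ∃ C, ∀ n, ‖tauSh A (p^n)‖ ≤ C * R^n := by
  induction A with
  | nil =>
    refine ⟨1, fun n => ?_⟩
    rcases Nat.eq_zero_or_pos n with rfl | hn
    · simp [tauSh]
    · have : p^n ≠ 1 := (Nat.one_lt_pow hn.ne' hp.one_lt).ne'
      simp only [tauSh, this, if_false, norm_zero]; positivity
  | cons a A ih =>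
    obtain ⟨C, hC⟩ := ih (fun x hx => hA x (List.mem_cons_of_mem _ hx))
    have ha := hA a List.mem_cons_self
    set c := ‖(p:ℂ)^(-a)‖ with hc
    have hc0 : 0 ≤ c := norm_nonneg _
    have hd : 0 < R - c := sub_pos.2 ha
    have hC1 : 1 ≤ C := by have := hC 0; rw [tau_zero] at this; simpa using this
    have hle : C * R = (C * R / (R - c)) * (R - c) := by field_simp
    refine ⟨C * R / (R - c), fun n => ?_⟩
    induction n with
    | zero =>
      rw [tau_zero, norm_one, pow_zero, mul_one, le_div_iff₀ hd]
      nlinarith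
    | succ n ihn =>
      rw [tau_cons a A hp]
      calc _ ≤ ‖tauSh A (p^(n+1))‖ + c * ‖tauSh (a :: A) (p^n)‖ := by
            rw [hc, ← norm_mul]; exact norm_add_le _ _
        _ ≤ C * R^(n+1) + c * (C * R / (R - c) * R^n) := by gcongr; exact hC _
        _ = (C * R) * R^n + c * (C * R / (R - c) * R^n) := by ring
        _ = ((C * R / (R - c)) * (R - c)) * R^n + c * (C * R / (R - c) * R^n) := by rw [← hle]
        _ = _ := by ring

lemma shift_bound {f : ℕ → ℂ} {C R : ℝ} (hR : 0 < R) (hf : ∀ n, ‖f n‖ ≤ C * R^n) {u : ℂ}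
    (hu : R * ‖u‖ < 1) :
    (∀ m, Summable (fun j => f (j+m) * u^j)) ∧
    ∀ m, ‖∑' j, f (j+m) * u^j‖ ≤ (C * (1 - R * ‖u‖)⁻¹) * R^m := by
  have r0 : 0 ≤ R * ‖u‖ := by positivity
  have hb : ∀ m j, ‖f (j+m) * u^j‖ ≤ (C * R^m) * (R*‖u‖)^j := by
    intro m j
    rw [norm_mul, norm_pow]
    calc _ ≤ (C * R^(j+m)) * ‖u‖^j := by gcongr; exact hf _
      _ = _ := by rw [mul_pow, pow_add]; ring
  refine ⟨fun m => (geom_bound r0 hu (hb m)).of_norm, fun m => ?_⟩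
  have hs := (hasSum_geometric_of_lt_one r0 hu).mul_left (C * R^m)
  exact (tsum_of_norm_bounded hs (hb m)).trans_eq (by ring)

lemma shift_rec {f : ℕ → ℂ} {u : ℂ} (hs : ∀ m, Summable (fun j => f (j+m) * u^j)) (m : ℕ) :
    ∑' j, f (j+m) * u^j = f m + u * ∑' j, f (j+(m+1)) * u^j := by
  rw [(hs m).tsum_eq_zero_add, ← tsum_mul_left]
  congr 1
  · simp
  · refine tsum_congr (fun j => ?_)
    rw [show j + 1 + m = j + (m+1) by ring, pow_succ]; ring

lemma euler (A : List ℂ) {p : ℕ} (hp : p.Prime) (R : ℝ) (hR : 0 < R) (u : ℂ) (hu : R * ‖u‖ < 1)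
    (hA : ∀ a ∈ A, ‖(p:ℂ)^(-a)‖ < R) :
    (A.map (fun a => 1 - u * (p:ℂ)^(-a))).prod * ∑' j, tauSh A (p^j) * u^j = 1 := by
  induction A with
  | nil =>
    rw [tsum_eq_single 0]
    · simp [tauSh]
    · intro j hj
      have : p^j ≠ 1 := (Nat.one_lt_pow hj hp.one_lt).ne'
      simp only [tauSh, this, if_false, zero_mul]
  | cons a A ih =>
    have hA' := fun x hx => hA x (List.mem_cons_of_mem a hx)
    rw [List.map_cons, List.prod_cons, mul_comm (1 - _), mul_assoc]
    convert ih hA' using 2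
    obtain ⟨C, hC⟩ := tau_bound _ hp R hR hA
    obtain ⟨C', hC'⟩ := tau_bound _ hp R hR hA'
    have h1 := (shift_bound (f := fun n => tauSh (a :: A) (p^n)) hR hC hu).1
    have h2 := (shift_bound (f := fun n => tauSh A (p^n)) hR hC' hu).1
    have e1 := shift_rec (f := fun n => tauSh (a :: A) (p^n)) h1 0
    have e2 := shift_rec (f := fun n => tauSh A (p^n)) h2 0
    simp only [tau_cons a A hp] at e1
    have s1 := h1 0
    have s2 := h2 1
    simp only [zero_add, add_zero, tau_zero] at e1 e2 s1
    have : ∑' j, (tauSh A (p^(j+1)) + (p:ℂ)^(-a) * tauSh (a :: A) (p^j)) * u^j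
        = ∑' j, tauSh A (p^(j+1)) * u^j + (p:ℂ)^(-a) * ∑' j, tauSh (a :: A) (p^j) * u^j := by
      rw [← tsum_mul_left, ← s2.tsum_add (s1.mul_left _)]
      exact tsum_congr (fun j => by ring)
    rw [this] at e1
    rw [e2]
    linear_combination e1

lemma g_pp (A : List ℂ) (s : ℂ) {p : ℕ} (hp : p.Prime) (R : ℝ) (hR : 0 < R)
    (hu : R * ‖(p:ℂ)^(-s)‖ < 1) (hA : ∀ a ∈ A, ‖(p:ℂ)^(-a)‖ < R) (m : ℕ) :
    gSh A s (p^m) = (A.map (fun a => 1 - (p:ℂ)^(-s) * (p:ℂ)^(-a))).prod *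
      ∑' j, tauSh A (p^(j+m)) * ((p:ℂ)^(-s))^j := by
  rcases Nat.eq_zero_or_pos m with rfl | hm
  · rw [pow_zero]
    simp only [add_zero, euler A hp R hR _ hu hA]
    simp [gSh]
  · have hp0 : (p:ℂ) ≠ 0 := by exact_mod_cast hp.ne_zero
    rw [gSh, Nat.primeFactors_prime_pow hm.ne' hp, Finset.prod_singleton]
    congr 1
    · congr 2
      funext a
      rw [← Complex.cpow_add _ _ hp0, sub_eq_add_neg (-s) a]
    · refine tsum_congr (fun j => ?_)
      rw [Nat.Prime.factorization_pow hp, Finsupp.single_eq_same, ← Complex.cpow_nat_mul]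
      congr 2
      ring

lemma G_pp (A : List ℂ) (s : ℂ) {p : ℕ} (hp : p.Prime) (m : ℕ) :
    GSh A s (p^(m+1)) = gSh A s (p^(m+1)) -
      (p:ℂ)^s / ((p:ℂ) - 1) * (gSh A s (p^m) - (p:ℂ)^(-s) * gSh A s (p^(m+1))) := by
  have hp0 : (p:ℂ) ≠ 0 := by exact_mod_cast hp.ne_zero
  rw [GSh, Nat.sum_divisors_prime_pow hp, Finset.sum_range_succ', Finset.sum_range_succ',
    Finset.sum_eq_zero]
  · have e1 : p^(m+1) * 1 / p = p^m := by
      rw [mul_one, pow_succ, Nat.mul_div_cancel _ hp.pos]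
    have e2 : p^(m+1) * p / p = p^(m+1) := Nat.mul_div_cancel _ hp.pos
    simp only [zero_add, pow_one, pow_zero, hp.divisors, Nat.divisors_one, Finset.sum_singleton]
    rw [Finset.sum_pair hp.one_lt.ne, e1, e2, ArithmeticFunction.moebius_apply_prime hp,
      Nat.totient_prime hp, Nat.cast_sub hp.one_le, Complex.cpow_neg]
    simp
    ring
  · intro k _
    rw [ArithmeticFunction.moebius_eq_zero_of_not_squarefree]
    · simp
    · intro h
      have := (Nat.squarefree_pow_iff hp.ne_one (by omega : k+1+1 ≠ 0)).1 h
      omega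

lemma G_formula (L₁ L₂ : List ℂ) (a : ℂ) {p : ℕ} (hp : p.Prime) (R : ℝ) (hR : 0 < R)
    (hu : R * ‖(p:ℂ)^(-(1-a))‖ < 1) (hA : ∀ x ∈ L₁ ++ a :: L₂, ‖(p:ℂ)^(-x)‖ < R) (m : ℕ) :
    GSh (L₁ ++ a :: L₂) (1-a) (p^m) =
      ((L₁ ++ L₂).map (fun x => 1 - (p:ℂ)^(-1 + a - x))).prod *
      ∑' j, tauSh (L₁ ++ L₂) (p^(j+m)) * ((p:ℂ)^(-(1-a)))^j := by
  have hp0 : (p:ℂ) ≠ 0 := by exact_mod_cast hp.ne_zero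
  have hp1 : (p:ℂ) - 1 ≠ 0 := by
    rw [sub_ne_zero]; exact_mod_cast hp.ne_one
  have hA' : ∀ x ∈ L₁ ++ L₂, ‖(p:ℂ)^(-x)‖ < R := fun x hx => hA x (by
    simp only [List.mem_append, List.mem_cons] at hx ⊢; tauto)
  have hP : ((L₁ ++ L₂).map (fun x => 1 - (p:ℂ)^(-1 + a - x))).prod =
      ((L₁ ++ L₂).map (fun x => 1 - (p:ℂ)^(-(1-a)) * (p:ℂ)^(-x))).prod := by
    congr 2
    funext x
    rw [← Complex.cpow_add _ _ hp0]
    congr 2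
    ring
  rw [hP]
  rcases m with _ | m
  · simp only [add_zero, euler _ hp R hR _ hu hA']
    simp [GSh, gSh]
  · rw [G_pp _ _ hp, g_pp _ _ hp R hR hu hA, g_pp _ _ hp R hR hu hA]
    obtain ⟨C, hC⟩ := tau_bound _ hp R hR hA
    have h1 := (shift_bound (f := fun n => tauSh (L₁ ++ a :: L₂) (p^n)) hR hC hu).1
    have hsplit : ((L₁ ++ a :: L₂).map (fun x => 1 - (p:ℂ)^(-(1-a)) * (p:ℂ)^(-x))).prod =
        (1 - (p:ℂ)^(-(1-a)) * (p:ℂ)^(-a)) *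
        ((L₁ ++ L₂).map (fun x => 1 - (p:ℂ)^(-(1-a)) * (p:ℂ)^(-x))).prod := by
      simp only [List.map_append, List.map_cons, List.prod_append, List.prod_cons]; ring
    have hrec : ∑' j, tauSh (L₁ ++ L₂) (p^(j+(m+1))) * ((p:ℂ)^(-(1-a)))^j =
        ∑' j, tauSh (L₁ ++ a :: L₂) (p^(j+(m+1))) * ((p:ℂ)^(-(1-a)))^j -
        (p:ℂ)^(-a) * ∑' j, tauSh (L₁ ++ a :: L₂) (p^(j+m)) * ((p:ℂ)^(-(1-a)))^j := by
      rw [← tsum_mul_left, ← (h1 (m+1)).tsum_sub ((h1 m).mul_left _)]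
      refine tsum_congr (fun j => ?_)
      rw [← add_assoc, tau_mid L₁ L₂ a hp]
      ring
    rw [hrec, hsplit]
    have hx : (p:ℂ)^(1-a) = p * (p:ℂ)^(-a) := by
      rw [sub_eq_add_neg, Complex.cpow_add _ _ hp0, Complex.cpow_one]
    have hc0 : (p:ℂ)^(-a) ≠ 0 := by simp [Complex.cpow_eq_zero_iff, hp0]
    rw [Complex.cpow_neg (p:ℂ) (1-a), hx]
    field_simp
    ring

lemma norm_u {p : ℕ} (hp : p.Prime) (z : ℂ) (hz : |z.re| < 1/4) :
    ((p:ℝ)^(1/4:ℝ)) * ‖(p:ℂ)^(-(1-z))‖ < 1 := by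
  have h0 : (0:ℝ) < p := by exact_mod_cast hp.pos
  have h1 : (1:ℝ) < p := by exact_mod_cast hp.one_lt
  rw [Complex.norm_natCast_cpow_of_pos hp.pos, ← Real.rpow_add h0]
  apply Real.rpow_lt_one_of_one_lt_of_neg h1
  have := (abs_lt.1 hz).2
  simp
  linarith

lemma norm_lt {p : ℕ} (hp : p.Prime) (z : ℂ) (hz : |z.re| < 1/4) :
    ‖(p:ℂ)^z‖ < (p:ℝ)^(1/4:ℝ) := by
  have h1 : (1:ℝ) < p := by exact_mod_cast hp.one_lt
  rw [Complex.norm_natCast_cpow_of_pos hp.pos]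
  exact Real.rpow_lt_rpow_of_exponent_lt h1 (abs_lt.1 hz).2

lemma norm_R {p : ℕ} (hp : p.Prime) : ((p:ℝ)^(1/4:ℝ))^2 * ‖((p:ℂ)⁻¹)‖ < 1 := by
  have h0 : (0:ℝ) < p := by exact_mod_cast hp.pos
  have h1 : (1:ℝ) < p := by exact_mod_cast hp.one_lt
  rw [norm_inv, Complex.norm_natCast, ← Real.rpow_natCast, ← Real.rpow_mul h0.le,
    ← Real.rpow_neg_one, ← Real.rpow_add h0]
  apply Real.rpow_lt_one_of_one_lt_of_neg h1
  norm_num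

end S14

set_option maxHeartbeats 1000000 in
/-- Let A, B be tuples all of whose entries have |ℜ| < 1/4, with
distinguished entries α̂ ∈ A, β̂ ∈ B, A′ = A minus α̂, B′ = B minus β̂. Then for every
prime p,
∏_{α∈A′}(1−p^{−1+α̂−α}) ∏_{β∈B′}(1−p^{−1+β̂−β}) (1−p^{−1+α̂+β̂})
  Σ_{j≥0} τ_{A′∪{−β̂}}(p^j) τ_{B′∪{−α̂}}(p^j) p^{−j}
  = Σ_{d≥0} Σ_{q=0}^{1} (−1)^q G_A(1−α̂,p^{d+q}) G_B(1−β̂,p^{d+q}) p^{−d−q(2−α̂−β̂)},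
all series converging absolutely. -/
theorem stmt14 (L₁ L₂ M₁ M₂ : List ℂ) (αh βh : ℂ)
    (hA : ∀ α ∈ L₁ ++ αh :: L₂, |α.re| < 1/4)
    (hB : ∀ β ∈ M₁ ++ βh :: M₂, |β.re| < 1/4)
    (p : ℕ) (hp : p.Prime) :
    Summable (fun j : ℕ =>
      ‖tauSh ((L₁ ++ L₂) ++ [-βh]) (p ^ j) * tauSh ((M₁ ++ M₂) ++ [-αh]) (p ^ j)
          * (p : ℂ) ^ (-(j : ℂ))‖) ∧
    Summable (fun x : ℕ × Fin 2 =>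
      ‖(-1 : ℂ) ^ (x.2 : ℕ) * GSh (L₁ ++ αh :: L₂) (1 - αh) (p ^ (x.1 + (x.2 : ℕ)))
          * GSh (M₁ ++ βh :: M₂) (1 - βh) (p ^ (x.1 + (x.2 : ℕ)))
          * (p : ℂ) ^ (-(x.1 : ℂ) - ((x.2 : ℕ) : ℂ) * (2 - αh - βh))‖) ∧
    ((L₁ ++ L₂).map (fun α => 1 - (p : ℂ) ^ (-1 + αh - α))).prod *
        ((M₁ ++ M₂).map (fun β => 1 - (p : ℂ) ^ (-1 + βh - β))).prod *
        (1 - (p : ℂ) ^ (-1 + αh + βh)) *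
        (∑' j : ℕ, tauSh ((L₁ ++ L₂) ++ [-βh]) (p ^ j) * tauSh ((M₁ ++ M₂) ++ [-αh]) (p ^ j)
          * (p : ℂ) ^ (-(j : ℂ)))
      = ∑' d : ℕ, ∑ q ∈ Finset.range 2,
          (-1 : ℂ) ^ q * GSh (L₁ ++ αh :: L₂) (1 - αh) (p ^ (d + q))
            * GSh (M₁ ++ βh :: M₂) (1 - βh) (p ^ (d + q))
            * (p : ℂ) ^ (-(d : ℂ) - (q : ℂ) * (2 - αh - βh)) := by
  have hp0 : (p:ℂ) ≠ 0 := by exact_mod_cast hp.ne_zero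
  have hpR : (0:ℝ) < p := by exact_mod_cast hp.pos
  have hαh : |αh.re| < 1/4 := hA αh (by simp)
  have hβh : |βh.re| < 1/4 := hB βh (by simp)
  have hR : (0:ℝ) < (p:ℝ)^(1/4:ℝ) := by positivity
  have hu := S14.norm_u hp αh hαh
  have hv := S14.norm_u hp βh hβh
  have hRw := S14.norm_R hp
  have nA : ∀ x ∈ L₁ ++ αh :: L₂, ‖(p:ℂ)^(-x)‖ < (p:ℝ)^(1/4:ℝ) := fun x hx =>
    S14.norm_lt hp _ (by simpa using hA x hx)
  have nB : ∀ x ∈ M₁ ++ βh :: M₂, ‖(p:ℂ)^(-x)‖ < (p:ℝ)^(1/4:ℝ) := fun x hx =>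
    S14.norm_lt hp _ (by simpa using hB x hx)
  have nA' : ∀ x ∈ L₁ ++ L₂, ‖(p:ℂ)^(-x)‖ < (p:ℝ)^(1/4:ℝ) := fun x hx => nA x (by
    simp only [List.mem_append, List.mem_cons] at hx ⊢; tauto)
  have nB' : ∀ x ∈ M₁ ++ M₂, ‖(p:ℂ)^(-x)‖ < (p:ℝ)^(1/4:ℝ) := fun x hx => nB x (by
    simp only [List.mem_append, List.mem_cons] at hx ⊢; tauto)
  have nX : ∀ x ∈ (L₁ ++ L₂) ++ [-βh], ‖(p:ℂ)^(-x)‖ < (p:ℝ)^(1/4:ℝ) := by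
    intro x hx
    rcases List.mem_append.1 hx with h | h
    · exact nA' x h
    · rw [List.mem_singleton.1 h, neg_neg]; exact S14.norm_lt hp _ hβh
  have nY : ∀ x ∈ (M₁ ++ M₂) ++ [-αh], ‖(p:ℂ)^(-x)‖ < (p:ℝ)^(1/4:ℝ) := by
    intro x hx
    rcases List.mem_append.1 hx with h | h
    · exact nB' x h
    · rw [List.mem_singleton.1 h, neg_neg]; exact S14.norm_lt hp _ hαh
  have GA := S14.G_formula L₁ L₂ αh hp _ hR hu nA
  have GB := S14.G_formula M₁ M₂ βh hp _ hR hv nB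
  obtain ⟨CA, hCA⟩ := S14.tau_bound _ hp _ hR nA'
  obtain ⟨CB, hCB⟩ := S14.tau_bound _ hp _ hR nB'
  obtain ⟨CX, hCX⟩ := S14.tau_bound _ hp _ hR nX
  obtain ⟨CY, hCY⟩ := S14.tau_bound _ hp _ hR nY
  obtain ⟨sS, bS⟩ := S14.shift_bound (f := fun n => tauSh (L₁ ++ L₂) (p^n)) hR hCA hu
  obtain ⟨sT, bT⟩ := S14.shift_bound (f := fun n => tauSh (M₁ ++ M₂) (p^n)) hR hCB hv
  have rS := S14.shift_rec (f := fun n => tauSh (L₁ ++ L₂) (p^n)) sS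
  have rT := S14.shift_rec (f := fun n => tauSh (M₁ ++ M₂) (p^n)) sT
  have hPu : (p:ℂ) * (p:ℂ)^(-(1-αh)) = (p:ℂ)^(-(-αh)) := by
    rw [show -(-αh) = 1 + -(1-αh) by ring, Complex.cpow_add _ _ hp0, Complex.cpow_one]
  have hPv : (p:ℂ) * (p:ℂ)^(-(1-βh)) = (p:ℂ)^(-(-βh)) := by
    rw [show -(-βh) = 1 + -(1-βh) by ring, Complex.cpow_add _ _ hp0, Complex.cpow_one]
  have rX : ∀ n, tauSh ((L₁ ++ L₂) ++ [-βh]) (p^(n+1)) = tauSh (L₁ ++ L₂) (p^(n+1)) +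
      (p:ℂ) * (p:ℂ)^(-(1-βh)) * tauSh ((L₁ ++ L₂) ++ [-βh]) (p^n) := by
    intro n
    have := S14.tau_mid (L₁ ++ L₂) [] (-βh) hp n
    rwa [List.append_nil, ← hPv] at this
  have rY : ∀ n, tauSh ((M₁ ++ M₂) ++ [-αh]) (p^(n+1)) = tauSh (M₁ ++ M₂) (p^(n+1)) +
      (p:ℂ) * (p:ℂ)^(-(1-αh)) * tauSh ((M₁ ++ M₂) ++ [-αh]) (p^n) := by
    intro n
    have := S14.tau_mid (M₁ ++ M₂) [] (-αh) hp n
    rwa [List.append_nil, ← hPu] at this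
  obtain ⟨s1, s2, s3, hmain⟩ := S14.main_abs (fun n => tauSh (L₁ ++ L₂) (p^n))
    (fun n => tauSh (M₁ ++ M₂) (p^n))
    (fun n => tauSh ((L₁ ++ L₂) ++ [-βh]) (p^n)) (fun n => tauSh ((M₁ ++ M₂) ++ [-αh]) (p^n))
    (fun m => ∑' j, tauSh (L₁ ++ L₂) (p^(j+m)) * ((p:ℂ)^(-(1-αh)))^j)
    (fun m => ∑' j, tauSh (M₁ ++ M₂) (p^(j+m)) * ((p:ℂ)^(-(1-βh)))^j)
    ((p:ℂ)^(-(1-αh))) ((p:ℂ)^(-(1-βh))) p (p:ℂ)⁻¹ (mul_inv_cancel₀ hp0)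
    (by simp only [S14.tau_zero]) (by simp only [S14.tau_zero]) rX rY rS rT
    _ hR.le hRw _ _ _ _ hCX hCY bS bT
  have hw : ∀ j : ℕ, (p:ℂ)^(-(j:ℂ)) = ((p:ℂ)⁻¹)^j := by
    intro j; rw [Complex.cpow_neg, Complex.cpow_natCast, inv_pow]
  have huv : (p:ℂ)^(-(2 - αh - βh)) = (p:ℂ)^(-(1-αh)) * (p:ℂ)^(-(1-βh)) := by
    rw [← Complex.cpow_add _ _ hp0]; congr 1; ring
  have hw0 : ∀ d : ℕ, (p:ℂ)^(-(d:ℂ) - ((0:ℕ):ℂ) * (2 - αh - βh)) = ((p:ℂ)⁻¹)^d := by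
    intro d; rw [← hw]; simp
  have hw1 : ∀ d : ℕ, (p:ℂ)^(-(d:ℂ) - ((1:ℕ):ℂ) * (2 - αh - βh)) =
      ((p:ℂ)⁻¹)^d * ((p:ℂ)^(-(1-αh)) * (p:ℂ)^(-(1-βh))) := by
    intro d; rw [← hw, ← huv, ← Complex.cpow_add _ _ hp0]; congr 1; push_cast; ring
  have hpuv : (p:ℂ)^(-1 + αh + βh) = (p:ℂ) * (p:ℂ)^(-(1-αh)) * (p:ℂ)^(-(1-βh)) := by
    rw [mul_assoc, ← huv, show -1 + αh + βh = 1 + -(2 - αh - βh) by ring,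
      Complex.cpow_add _ _ hp0, Complex.cpow_one]
  refine ⟨?_, ?_, ?_⟩
  · simpa only [hw] using s1
  · have hsum : ∀ q : Fin 2, Summable (fun d : ℕ =>
      ‖(-1 : ℂ) ^ (q : ℕ) * GSh (L₁ ++ αh :: L₂) (1 - αh) (p ^ (d + (q : ℕ)))
          * GSh (M₁ ++ βh :: M₂) (1 - βh) (p ^ (d + (q : ℕ)))
          * (p : ℂ) ^ (-(d : ℂ) - ((q : ℕ) : ℂ) * (2 - αh - βh))‖) := by
      intro q
      fin_cases q
      · simp only [hw0, GA, GB]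
        refine (s2.mul_left (‖((L₁ ++ L₂).map (fun α => 1 - (p : ℂ) ^ (-1 + αh - α))).prod *
          ((M₁ ++ M₂).map (fun β => 1 - (p : ℂ) ^ (-1 + βh - β))).prod‖)).congr (fun d => ?_)
        rw [← norm_mul]
        congr 1
        simp only [add_zero]
        ring
      · simp only [hw1, GA, GB]
        refine (s3.mul_left (‖-((L₁ ++ L₂).map (fun α => 1 - (p : ℂ) ^ (-1 + αh - α))).prod *
          ((M₁ ++ M₂).map (fun β => 1 - (p : ℂ) ^ (-1 + βh - β))).prod *
          ((p:ℂ)^(-(1-αh)) * (p:ℂ)^(-(1-βh)))‖)).congr (fun d => ?_)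
        rw [← norm_mul]
        congr 1
        ring
    rw [← (Equiv.prodComm (Fin 2) ℕ).summable_iff]
    refine (summable_prod_of_nonneg ?_).2 ⟨hsum, ?_⟩
    · intro x
      exact norm_nonneg _
    · exact (hasSum_fintype _).summable
  · simp only [hw]
    rw [hpuv, mul_assoc, hmain, ← tsum_mul_left]
    refine tsum_congr (fun d => ?_)
    rw [Finset.sum_range_succ, Finset.sum_range_one, hw0, hw1, GA, GB, GA, GB]
    simp only [add_zero]
    ring
end

section
/- Let A be a tuple of complex numbers and s a complex number with ℜ(s+α) > 0 for every entry α of A. Then the function q ↦ G_A(s,q) on the positive integers is multiplicative: G_A(s, q₁q₂) = G_A(s, q₁) G_A(s, q₂) whenever gcd(q₁, q₂) = 1. -/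
open Complex

lemma sum_div_mul (m n : ℕ) (hmn : m.Coprime n) (f : ℕ → ℂ) :
    ∑ d ∈ (m * n).divisors, f d = ∑ a ∈ m.divisors, ∑ b ∈ n.divisors, f (a * b) := by
  classical
  rw [Nat.divisors_mul, ← Finset.sum_product']
  change ∑ d ∈ Finset.image₂ (· * ·) m.divisors n.divisors, f d = _
  rw [← Finset.image_uncurry_product, Finset.sum_image]
  · rfl
  · intro x hx y hy h
    refine hmn.mul_injOn_divisors ?_ ?_ h
    · simpa using hx
    · simpa using hy

lemma gSh_mul (A : List ℂ) (s : ℂ) (m n : ℕ) (hmn : m.Coprime n) :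
    gSh A s (m * n) = gSh A s m * gSh A s n := by
  unfold gSh
  rw [hmn.primeFactors_mul, Finset.prod_union hmn.disjoint_primeFactors]
  congr 1
  · refine Finset.prod_congr rfl fun p hp => ?_
    rw [Nat.factorization_eq_of_coprime_left hmn (Nat.mem_primeFactors_iff_mem_primeFactorsList.mp hp)]
  · refine Finset.prod_congr rfl fun p hp => ?_
    rw [Nat.factorization_eq_of_coprime_right hmn (Nat.mem_primeFactors_iff_mem_primeFactorsList.mp hp)]

/-- For a tuple A and s with ℜ(s+α) > 0 for every entry α of A, the
function q ↦ G_A(s,q) on the positive integers is multiplicative. -/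
theorem stmt15 (A : List ℂ) (s : ℂ) (hA : ∀ α ∈ A, 0 < (s + α).re)
    (q₁ q₂ : ℕ) (h₁ : 0 < q₁) (h₂ : 0 < q₂) (hco : Nat.Coprime q₁ q₂) :
    GSh A s (q₁ * q₂) = GSh A s q₁ * GSh A s q₂ := by
  unfold GSh
  rw [sum_div_mul _ _ hco, Finset.sum_mul_sum]
  refine Finset.sum_congr rfl fun a ha => Finset.sum_congr rfl fun b hb => ?_
  have ha' := Nat.dvd_of_mem_divisors ha
  have hb' := Nat.dvd_of_mem_divisors hb
  have hab : a.Coprime b := (hco.coprime_dvd_left ha').coprime_dvd_right hb'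
  have hinner : ∑ e ∈ (a * b).divisors, (ArithmeticFunction.moebius e : ℂ) / (e : ℂ) ^ s *
        gSh A s (q₁ * q₂ * e / (a * b)) =
      (∑ e ∈ a.divisors, (ArithmeticFunction.moebius e : ℂ) / (e : ℂ) ^ s * gSh A s (q₁ * e / a)) *
      ∑ e ∈ b.divisors, (ArithmeticFunction.moebius e : ℂ) / (e : ℂ) ^ s * gSh A s (q₂ * e / b) := by
    rw [sum_div_mul _ _ hab, Finset.sum_mul_sum]
    refine Finset.sum_congr rfl fun e he => Finset.sum_congr rfl fun f hf => ?_
    have he' := Nat.dvd_of_mem_divisors he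
    have hf' := Nat.dvd_of_mem_divisors hf
    have hef : e.Coprime f := (hab.coprime_dvd_left he').coprime_dvd_right hf'
    have hq : q₁ * q₂ * (e * f) / (a * b) = (q₁ * e / a) * (q₂ * f / b) := by
      rw [Nat.div_mul_div_comm (ha'.mul_right e) (hb'.mul_right f)]
      congr 1
      ring
    have hc : (q₁ * e / a).Coprime (q₂ * f / b) := by
      have h1 : q₁ * e / a ∣ q₁ * q₁ :=
        (Nat.div_dvd_of_dvd (ha'.mul_right e)).trans (mul_dvd_mul_left _ (he'.trans ha'))
      have h2 : q₂ * f / b ∣ q₂ * q₂ :=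
        (Nat.div_dvd_of_dvd (hb'.mul_right f)).trans (mul_dvd_mul_left _ (hf'.trans hb'))
      have h3 : (q₁ * q₁).Coprime (q₂ * q₂) :=
        (hco.mul_right hco).mul_left (hco.mul_right hco)
      exact (h3.coprime_dvd_left h1).coprime_dvd_right h2
    rw [hq, gSh_mul A s _ _ hc,
      ArithmeticFunction.isMultiplicative_moebius.map_mul_of_coprime hef]
    push_cast
    rw [natCast_mul_natCast_cpow, mul_div_mul_comm]
    ring
  rw [hinner, ArithmeticFunction.isMultiplicative_moebius.map_mul_of_coprime hab,
    Nat.totient_mul hab]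
  push_cast
  rw [natCast_mul_natCast_cpow, mul_div_mul_comm]
  ring
end
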